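/- Let T = { x ∈ ℝⁿ : f₁(x) = ⋯ = f_{m₁}(x) = 0, h₁(x) ≥ 0, …, h_{m₂}(x) ≥ 0 } be a compact set defined by real polynomials fᵢ, hⱼ. If T satisfies the positive definite Lagrange Hessian (PDLH) condition at every u ∈ ∂_cT, then conv(T) is SDP representable. -/

import Mathlib

open MvPolynomial Metric Set Pointwise Filter

noncomputable section

/-- `ℝⁿ` with the Euclidean norm. -/
abbrev Rn (n : ℕ) : Type := EuclideanSpace ℝ (Fin n)

/-- A set `S ⊆ ℝⁿ` is SDP representable if it is the projection of a spectrahedron: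
there are symmetric matrices `A₀, A i, B j` with
`S = { x | ∃ u, A₀ + Σ xᵢ Aᵢ + Σ uⱼ Bⱼ ⪰ 0 }`. -/
def IsSDPRepresentable {n : ℕ} (S : Set (Rn n)) : Prop :=
  ∃ (N d : ℕ) (A₀ : Matrix (Fin d) (Fin d) ℝ)
    (A : Fin n → Matrix (Fin d) (Fin d) ℝ) (B : Fin N → Matrix (Fin d) (Fin d) ℝ),
    A₀.IsSymm ∧ (∀ i, (A i).IsSymm) ∧ (∀ j, (B j).IsSymm) ∧
    S = {x : Rn n | ∃ u : Fin N → ℝ,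
      (A₀ + ∑ i, x i • A i + ∑ j, u j • B j).PosSemidef}

/-- Evaluation of a polynomial at a point of `ℝⁿ`. -/
def peval {n : ℕ} (g : MvPolynomial (Fin n) ℝ) (x : Rn n) : ℝ :=
  MvPolynomial.eval (fun i => x i) g

/-- The gradient `∇g(u)` of a polynomial. -/
def pgrad {n : ℕ} (g : MvPolynomial (Fin n) ℝ) (u : Rn n) : Fin n → ℝ :=
  fun i => MvPolynomial.eval (fun j => u j) (MvPolynomial.pderiv i g)

/-- The Hessian `∇²g(u)` of a polynomial. -/
def phess {n : ℕ} (g : MvPolynomial (Fin n) ℝ) (u : Rn n) : Matrix (Fin n) (Fin n) ℝ :=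
  Matrix.of fun i j =>
    MvPolynomial.eval (fun k => u k) (MvPolynomial.pderiv i (MvPolynomial.pderiv j g))

/-- A polynomial `g` is sos-concave if `-∇²g(x) = W(x)ᵀ W(x)` for some
(possibly nonsquare) matrix polynomial `W`. -/
def SosConcave {n : ℕ} (g : MvPolynomial (Fin n) ℝ) : Prop :=
  ∃ (k : ℕ) (W : Fin k → Fin n → MvPolynomial (Fin n) ℝ),
    ∀ i j, - MvPolynomial.pderiv i (MvPolynomial.pderiv j g) = ∑ l, W l i * W l j

/-- `g` is quasi-concave at `u` : `-vᵀ∇²g(u)v ≥ 0` for every `v` with `∇g(u)ᵀv = 0`. -/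
def QuasiConcaveAt {n : ℕ} (g : MvPolynomial (Fin n) ℝ) (u : Rn n) : Prop :=
  ∀ v : Fin n → ℝ, (∑ i, pgrad g u i * v i) = 0 →
    0 ≤ -(∑ i, ∑ j, v i * phess g u i j * v j)

/-- `g` is strictly quasi-concave at `u` : if `∇g(u) ≠ 0` then `-vᵀ∇²g(u)v > 0`
for all nonzero `v ⊥ ∇g(u)`; if `∇g(u) = 0` then `-∇²g(u)` is positive definite. -/
def StrictlyQuasiConcaveAt {n : ℕ} (g : MvPolynomial (Fin n) ℝ) (u : Rn n) : Prop :=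
  (pgrad g u ≠ 0 ∧ ∀ v : Fin n → ℝ, v ≠ 0 → (∑ i, pgrad g u i * v i) = 0 →
      0 < -(∑ i, ∑ j, v i * phess g u i j * v j)) ∨
  (pgrad g u = 0 ∧ (-(phess g u)).PosDef)

/-- The convex boundary `∂_c T` : points of `T` minimizing some unit linear functional. -/
def convexBoundary {n : ℕ} (T : Set (Rn n)) : Set (Rn n) :=
  {u ∈ T | ∃ l : Rn n, ‖l‖ = 1 ∧ ∀ x ∈ T, (∑ i, l i * u i) ≤ ∑ i, l i * x i}

/-- `v` is a nonsingular point of `∂T` (w.r.t. defining polynomials `g`):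
exactly one defining polynomial vanishes at `v`, with nonvanishing gradient. -/
def IsNonsingularBoundaryPoint {n m : ℕ} (g : Fin m → MvPolynomial (Fin n) ℝ)
    (T : Set (Rn n)) (v : Rn n) : Prop :=
  v ∈ frontier T ∧ ∃ i, peval (g i) v = 0 ∧ pgrad (g i) v ≠ 0 ∧
    ∀ j, peval (g j) v = 0 → j = i

/-- A polynomial is SOS if it is a finite sum of squares of polynomials. -/
def IsSOSPoly {n : ℕ} (p : MvPolynomial (Fin n) ℝ) : Prop :=
  ∃ (k : ℕ) (q : Fin k → MvPolynomial (Fin n) ℝ), p = ∑ i, (q i) ^ 2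

/-- The polynomial `δ² - ‖x - u‖²`. -/
def ballPoly {n : ℕ} (u : Rn n) (δ : ℝ) : MvPolynomial (Fin n) ℝ :=
  MvPolynomial.C (δ ^ 2) - ∑ i, (MvPolynomial.X i - MvPolynomial.C (u i)) ^ 2

/-- The family `h₁, …, h_{m₂}` extended by the ball polynomial `h_m(x) = δ² - ‖x-u‖²`. -/
def extFamily {n m2 : ℕ} (h : Fin m2 → MvPolynomial (Fin n) ℝ) (u : Rn n) (δ : ℝ) :
    Fin (m2 + 1) → MvPolynomial (Fin n) ℝ :=
  Fin.snoc h (ballPoly u δ)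

/-- The positive definite Lagrange Hessian (PDLH) condition at `u` with radius `δu`,
for the set `T = {x | f(x) = 0, h(x) ≥ 0}`. -/
def PDLHAt {n m1 m2 : ℕ} (f : Fin m1 → MvPolynomial (Fin n) ℝ)
    (h : Fin m2 → MvPolynomial (Fin n) ℝ) (T : Set (Rn n)) (u : Rn n) (δu : ℝ) : Prop :=
  ∀ l : Rn n, ‖l‖ = 1 → ∀ δ : ℝ, 0 < δ → δ ≤ δu →
    ∀ v ∈ T ∩ closedBall u δ,
      (∀ x ∈ T ∩ closedBall u δ, (∑ i, l i * v i) ≤ ∑ i, l i * x i) →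
      ∃ (lam : Fin m1 → ℝ) (mu : Fin (m2 + 1) → ℝ),
        (∀ j, 0 ≤ mu j) ∧
        (∀ j, mu j * peval (extFamily h u δ j) v = 0) ∧
        (∀ i, l i = (∑ k, lam k * pgrad (f k) v i) +
            ∑ j, mu j * pgrad (extFamily h u δ j) v i) ∧
        ∀ x ∈ closedBall u δ,
          (Matrix.of (fun i i' : Fin n =>
            -(∑ k, lam k * phess (f k) x i i') -
              ∑ j, mu j * phess (extFamily h u δ j) x i i')).PosDef

/-- `Z(g) ∩ ∂S` has strictly convex shape with respect to `S`. -/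
def StrictlyConvexShape {n : ℕ} (g : MvPolynomial (Fin n) ℝ) (S : Set (Rn n)) : Prop :=
  ∃ Y U : Set (Rn n), IsOpen U ∧ Y = {x | peval g x = 0} ∩ U ∧
    {x | peval g x = 0} ∩ frontier S ⊆ Y ∧
    (∀ p ∈ closure Y, pgrad g p ≠ 0) ∧
    ∀ p ∈ closure Y,
      (∃ ε : ℝ, (ε = 1 ∨ ε = -1) ∧
        ∀ q ∈ S ∪ closure Y, ε * (∑ i, pgrad g p i * (q i - p i)) ≤ 0) ∧
      ∀ q ∈ S ∪ closure Y, (∑ i, pgrad g p i * (q i - p i)) = 0 → q = p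

/-!
Near a point `u` of the convex boundary, let `K` be the part of `T` in a small closed ball around
`u`. The multipliers at a minimizer `v` of a linear form over `K` combine the constraints into a
polynomial `p` with negative definite Hessian that is nonnegative on `K` and vanishes at `v`. As
`p` vanishes wherever all the constraints active at `v` are active, finitely many such `p` serve all
minimizers. Comparing gradients at `v`, each linear form has a unique minimizer, so `conv K` is
strictly convex; by strict concavity it is then the set where these `p` and the ball polynomial are
nonnegative.

If `-∇²p` is positive definite at `x₀`, then `{0 ≤ p}` is a spectrahedral shadow in a small box
around `x₀`, because the moment relaxation is exact there: a truncated pseudo-expectation `L` on the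
box satisfies Jensen's inequality `L p ≤ p (mean L)`, as the second-order term of `L p` at the mean,
a negative multiple of the trace of the covariance, dominates the Taylor error.

Finally, the convex hull of finitely many bounded spectrahedral shadows is a spectrahedral shadow,
which by compactness passes from the local statements to `{x | ∀ p ∈ P, 0 ≤ p x}` and to `conv T`.
-/

/-! ### Spectrahedra and their shadows -/

section Spectrahedra

variable {E F V W : Type*} [AddCommGroup E] [Module ℝ E] [AddCommGroup F] [Module ℝ F]
  [AddCommGroup V] [Module ℝ V] [AddCommGroup W] [Module ℝ W]

/-- A spectrahedron in a real vector space: the set where an affine family of quadratic forms in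
finitely many variables (a linear matrix inequality, without a choice of coordinates on the space)
is positive semidefinite. -/
def IsSpectrahedron (S : Set E) : Prop :=
  ∃ (d : ℕ) (Q : E →ᵃ[ℝ] QuadraticForm ℝ (Fin d → ℝ)), S = {x | ∀ w, 0 ≤ Q x w}

/-- A spectrahedral shadow: the projection of a spectrahedron along finitely many auxiliary
coordinates. -/
def IsSpectrahedralShadow (S : Set E) : Prop :=
  ∃ (N : ℕ) (R : Set (E × (Fin N → ℝ))), IsSpectrahedron R ∧ Prod.fst '' R = S

/-- Pullback of quadratic forms along a linear map, as a linear map. -/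
def quadraticPullback (f : V →ₗ[ℝ] W) : QuadraticForm ℝ W →ₗ[ℝ] QuadraticForm ℝ V where
  toFun Q := Q.comp f
  map_add' _ _ := rfl
  map_smul' _ _ := rfl

@[simp] theorem quadraticPullback_apply (f : V →ₗ[ℝ] W) (Q : QuadraticForm ℝ W) (v : V) :
    quadraticPullback f Q v = Q (f v) := rfl

namespace IsSpectrahedron

theorem of_affineMap [Module.Finite ℝ V] (Q : E →ᵃ[ℝ] QuadraticForm ℝ V) :
    IsSpectrahedron {x | ∀ v, 0 ≤ Q x v} := by
  let e := (Module.finBasis ℝ V).equivFun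
  refine ⟨_, (quadraticPullback e.symm.toLinearMap).toAffineMap.comp Q, ?_⟩
  ext x
  exact e.symm.surjective.forall

theorem preimage {R : Set F} (hR : IsSpectrahedron R) (g : E →ᵃ[ℝ] F) :
    IsSpectrahedron (g ⁻¹' R) := by
  obtain ⟨d, Q, rfl⟩ := hR
  exact ⟨d, Q.comp g, rfl⟩

theorem inter {R S : Set E} (hR : IsSpectrahedron R) (hS : IsSpectrahedron S) :
    IsSpectrahedron (R ∩ S) := by
  obtain ⟨d, Q, rfl⟩ := hR
  obtain ⟨e, P, rfl⟩ := hS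
  convert of_affineMap
    ((quadraticPullback (LinearMap.fst ℝ (Fin d → ℝ) (Fin e → ℝ))).toAffineMap.comp Q +
      (quadraticPullback (LinearMap.snd ℝ (Fin d → ℝ) (Fin e → ℝ))).toAffineMap.comp P) using 1
  ext x
  refine ⟨fun h w => add_nonneg (h.1 w.1) (h.2 w.2), fun h => ⟨fun w => ?_, fun w => ?_⟩⟩
  · simpa using h (w, 0)
  · simpa using h (0, w)

theorem halfspace (φ : E →ᵃ[ℝ] ℝ) : IsSpectrahedron {x | 0 ≤ φ x} := by
  convert of_affineMap
    ((LinearMap.toSpanSingleton ℝ _ (QuadraticMap.sq (R := ℝ) (A := ℝ))).toAffineMap.comp φ) using 1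
  ext x
  refine ⟨fun h w => mul_nonneg h (mul_self_nonneg w), fun h => ?_⟩
  simpa using h 1

theorem hyperplane (φ : E →ᵃ[ℝ] ℝ) : IsSpectrahedron {x | φ x = 0} := by
  convert (halfspace φ).inter (halfspace (-φ)) using 1
  ext x
  simpa using le_antisymm_iff.trans and_comm

theorem univ : IsSpectrahedron (Set.univ : Set E) := by
  simpa using halfspace (0 : E →ᵃ[ℝ] ℝ)

theorem empty : IsSpectrahedron (∅ : Set E) := by
  convert halfspace (AffineMap.const ℝ E (-1 : ℝ)) using 1
  ext x
  simp

theorem biInter {ι : Type*} (s : Finset ι) {R : ι → Set E} (h : ∀ i ∈ s, IsSpectrahedron (R i)) :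
    IsSpectrahedron (⋂ i ∈ s, R i) := by
  classical
  induction s using Finset.induction_on with
  | empty => simpa using univ
  | insert i s _ ih =>
    rw [Finset.forall_mem_insert] at h
    rw [Finset.set_biInter_insert]
    exact h.1.inter (ih h.2)

theorem singleton [Module.Finite ℝ E] (x : E) : IsSpectrahedron {x} := by
  let b := Module.finBasis ℝ E
  convert biInter Finset.univ fun i _ =>
    hyperplane ((b.coord i).toAffineMap - AffineMap.const ℝ E (b.repr x i)) using 1
  ext y
  simp [sub_eq_zero, ← b.repr.injective.eq_iff, DFunLike.ext_iff]

theorem graph [Module.Finite ℝ E] (g : F →ₗ[ℝ] E) : IsSpectrahedron {p : E × F | p.1 = g p.2} := by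
  convert (singleton (0 : E)).preimage
    (LinearMap.fst ℝ E F - g ∘ₗ LinearMap.snd ℝ E F).toAffineMap using 1
  ext p
  simp [sub_eq_zero]

theorem convex {R : Set E} (hR : IsSpectrahedron R) : Convex ℝ R := by
  obtain ⟨d, Q, rfl⟩ := hR
  intro x hx y hy s t hs ht hst w
  rw [Convex.combo_affine_apply hst]
  exact add_nonneg (mul_nonneg hs (hx w)) (mul_nonneg ht (hy w))

theorem isSpectrahedralShadow_image_fst [Module.Finite ℝ F] {R : Set (E × F)}
    (hR : IsSpectrahedron R) : IsSpectrahedralShadow (Prod.fst '' R) := by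
  let e := (Module.finBasis ℝ F).equivFun
  refine ⟨_, _, hR.preimage ((LinearMap.id (M := E)).prodMap e.symm.toLinearMap).toAffineMap, ?_⟩
  ext x
  simp [e.symm.surjective.exists]

theorem isSpectrahedralShadow_image_of_finite [Module.Finite ℝ E] [Module.Finite ℝ F] {R : Set E}
    (hR : IsSpectrahedron R) (g : E →ₗ[ℝ] F) : IsSpectrahedralShadow (g '' R) := by
  convert ((graph g).inter
    (hR.preimage (LinearMap.snd ℝ F E).toAffineMap)).isSpectrahedralShadow_image_fst using 1
  ext y
  simp [and_comm, eq_comm]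

/-- The space `E` may be infinite-dimensional: only the values of `g` and of the quadratic forms
matter, and these range over a finite-dimensional space. -/
theorem isSpectrahedralShadow_image [Module.Finite ℝ F] {R : Set E} (hR : IsSpectrahedron R)
    (g : E →ₗ[ℝ] F) : IsSpectrahedralShadow (g '' R) := by
  obtain ⟨d, Q, rfl⟩ := hR
  have : Module.Finite ℝ (QuadraticForm ℝ (Fin d → ℝ)) :=
    .of_injective _ (QuadraticMap.associated_rightInverse ℝ).injective
  let M := LinearMap.range (g.prod Q.linear)
  let P : M →ᵃ[ℝ] QuadraticForm ℝ (Fin d → ℝ) :=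
    (LinearMap.snd ℝ F _ ∘ₗ M.subtype).toAffineMap + AffineMap.const ℝ M (Q 0)
  have hQ : {x | ∀ w, 0 ≤ Q x w} =
      (g.prod Q.linear).rangeRestrict ⁻¹' {m | ∀ w, 0 ≤ P m w} := by
    ext x
    exact forall_congr' fun w => by rw [congrFun Q.decomp x]; rfl
  convert (of_affineMap P).isSpectrahedralShadow_image_of_finite
    (LinearMap.fst ℝ F _ ∘ₗ M.subtype) using 1
  rw [hQ, ← image_preimage_eq {m | ∀ w, 0 ≤ P m w} (g.prod Q.linear).surjective_rangeRestrict,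
    preimage_image_preimage, image_image]
  rfl

theorem isSpectrahedralShadow {R : Set E} (hR : IsSpectrahedron R) : IsSpectrahedralShadow R := by
  refine ⟨0, _, hR.preimage (LinearMap.fst ℝ E _).toAffineMap, ?_⟩
  exact image_preimage_eq R Prod.fst_surjective

end IsSpectrahedron

namespace IsSpectrahedralShadow

theorem convex {S : Set E} (hS : IsSpectrahedralShadow S) : Convex ℝ S := by
  obtain ⟨N, R, hR, rfl⟩ := hS
  exact hR.convex.linear_image (LinearMap.fst ℝ E (Fin N → ℝ))

theorem preimage {S : Set F} (hS : IsSpectrahedralShadow S) (g : E →ᵃ[ℝ] F) :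
    IsSpectrahedralShadow (g ⁻¹' S) := by
  obtain ⟨N, R, hR, rfl⟩ := hS
  refine ⟨N, _, hR.preimage (g.prodMap (AffineMap.id ℝ (Fin N → ℝ))), ?_⟩
  ext x
  simp

theorem inter {S T : Set E} (hS : IsSpectrahedralShadow S) (hT : IsSpectrahedralShadow T) :
    IsSpectrahedralShadow (S ∩ T) := by
  obtain ⟨N, R, hR, rfl⟩ := hS
  obtain ⟨M, P, hP, rfl⟩ := hT
  let fst := (LinearMap.id (M := E)).prodMap (LinearMap.fst ℝ (Fin N → ℝ) (Fin M → ℝ))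
  let snd := (LinearMap.id (M := E)).prodMap (LinearMap.snd ℝ (Fin N → ℝ) (Fin M → ℝ))
  convert ((hR.preimage fst.toAffineMap).inter
    (hP.preimage snd.toAffineMap)).isSpectrahedralShadow_image_fst using 1
  ext x
  simp [fst, snd]

theorem biInter {ι : Type*} (s : Finset ι) {S : ι → Set E}
    (h : ∀ i ∈ s, IsSpectrahedralShadow (S i)) : IsSpectrahedralShadow (⋂ i ∈ s, S i) := by
  classical
  induction s using Finset.induction_on with
  | empty => simpa using IsSpectrahedron.univ.isSpectrahedralShadow
  | insert i s _ ih =>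
    rw [Finset.forall_mem_insert] at h
    rw [Finset.set_biInter_insert]
    exact h.1.inter (ih h.2)

theorem image [Module.Finite ℝ F] {S : Set E} (hS : IsSpectrahedralShadow S) (g : E →ₗ[ℝ] F) :
    IsSpectrahedralShadow (g '' S) := by
  obtain ⟨N, R, hR, rfl⟩ := hS
  rw [image_image]
  exact hR.isSpectrahedralShadow_image (g ∘ₗ LinearMap.fst ℝ E _)

theorem of_subsingleton [Module.Finite ℝ E] {S : Set E} (hS : S.Subsingleton) :
    IsSpectrahedralShadow S := by
  obtain rfl | ⟨x, rfl⟩ := hS.eq_empty_or_singleton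
  · exact IsSpectrahedron.empty.isSpectrahedralShadow
  · exact (IsSpectrahedron.singleton x).isSpectrahedralShadow

end IsSpectrahedralShadow

end Spectrahedra

section Gluing

theorem eq_zero_of_forall_add_smul_mem_of_isBounded {E : Type*} [NormedAddCommGroup E]
    [NormedSpace ℝ E] {S : Set E} (hS : Bornology.IsBounded S) {x v : E}
    (h : ∀ t : ℝ, 0 ≤ t → x + t • v ∈ S) : v = 0 := by
  obtain ⟨r, hr⟩ := hS.exists_norm_le
  have hbound (k : ℕ) : k * ‖v‖ ≤ r + ‖x‖ := by
    calc k * ‖v‖ = ‖(x + (k : ℝ) • v) - x‖ := by simp [norm_smul]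
      _ ≤ ‖x + (k : ℝ) • v‖ + ‖x‖ := norm_sub_le _ _
      _ ≤ r + ‖x‖ := by gcongr; exact hr _ (h k k.cast_nonneg)
  by_contra hv
  obtain ⟨k, hk⟩ := exists_nat_gt ((r + ‖x‖) / ‖v‖)
  exact (hbound k).not_gt ((div_lt_iff₀ (norm_pos_iff.2 hv)).1 hk)

theorem IsSpectrahedron.exists_homogenization {E : Type*} [AddCommGroup E] [Module ℝ E]
    {R : Set E} (hR : IsSpectrahedron R) :
    ∃ C : Set (E × ℝ), IsSpectrahedron C ∧ (∀ p ∈ C, 0 ≤ p.2) ∧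
      (∀ x, ∀ s > 0, (s • x, s) ∈ C ↔ x ∈ R) ∧ 0 ∈ C ∧
      ∀ x ∈ R, ∀ v, (v, 0) ∈ C → ∀ t : ℝ, 0 ≤ t → x + t • v ∈ R := by
  obtain ⟨d, Q, rfl⟩ := hR
  have hQ (x : E) : Q x = Q.linear x + Q 0 := congrFun Q.decomp x
  refine ⟨{p | ∀ w, 0 ≤ (Q.linear.coprod (LinearMap.toSpanSingleton ℝ _ (Q 0))).toAffineMap p w} ∩
    {p | 0 ≤ (LinearMap.snd ℝ E ℝ).toAffineMap p},
    (of_affineMap _).inter (halfspace _), fun p hp => hp.2, fun x s hs => ?_, ?_, ?_⟩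
  · simp [hQ x, hs.le, ← mul_add, hs]
  · simp
  · intro x hx v hv t ht w
    have hv' : 0 ≤ Q.linear v w := by simpa using hv.1 w
    have := hx w
    rw [hQ] at this ⊢
    simp only [map_add, map_smul, add_apply, smul_apply, smul_eq_mul] at this ⊢
    linarith [mul_nonneg ht hv']

namespace IsSpectrahedralShadow

variable {E : Type*} [NormedAddCommGroup E] [NormedSpace ℝ E]

theorem cone {S : Set E} (hS : IsSpectrahedralShadow S) (hne : S.Nonempty)
    (hb : Bornology.IsBounded S) :
    IsSpectrahedralShadow {p : E × ℝ | 0 ≤ p.2 ∧ p.1 ∈ p.2 • S} := by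
  obtain ⟨N, R, hR, rfl⟩ := hS
  obtain ⟨C, hC, hCnonneg, hCpos, hCzero, hCrec⟩ := hR.exists_homogenization
  let g : (E × ℝ) × (Fin N → ℝ) →ₗ[ℝ] (E × (Fin N → ℝ)) × ℝ :=
    (((LinearMap.fst ℝ E ℝ).prodMap LinearMap.id).prod
      (LinearMap.snd ℝ E ℝ ∘ₗ LinearMap.fst ℝ _ _))
  convert (hC.preimage g.toAffineMap).isSpectrahedralShadow_image_fst using 1
  ext ⟨x, s⟩
  have hmem : (x, s) ∈ Prod.fst '' (g.toAffineMap ⁻¹' C) ↔ ∃ u, ((x, u), s) ∈ C := by simp [g]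
  rw [hmem]
  constructor
  · rintro ⟨hs : 0 ≤ s, _, ⟨⟨y, u⟩, hu, rfl⟩, rfl : s • y = x⟩
    refine ⟨s • u, ?_⟩
    rcases hs.eq_or_lt with rfl | hs
    · rw [zero_smul, zero_smul]
      exact hCzero
    · exact (hCpos (y, u) s hs).2 hu
  · rintro ⟨u, hu⟩
    have hs : 0 ≤ s := hCnonneg _ hu
    refine ⟨hs, ?_⟩
    rcases hs.eq_or_lt with rfl | hs
    · obtain ⟨_, ⟨y, w⟩, hy, rfl⟩ := hne
      have hx : x = 0 := eq_zero_of_forall_add_smul_mem_of_isBounded hb (x := y) fun t ht =>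
        ⟨_, hCrec (y, w) hy (x, u) hu t ht, rfl⟩
      exact ⟨y, ⟨(y, w), hy, rfl⟩, by simp [hx]⟩
    · refine ⟨s⁻¹ • x, ⟨s⁻¹ • (x, u), (hCpos _ s hs).1 ?_, rfl⟩, smul_inv_smul₀ hs.ne' x⟩
      rwa [smul_inv_smul₀ hs.ne']

theorem convexHull_union [Module.Finite ℝ E] {S T : Set E} (hS : IsSpectrahedralShadow S)
    (hT : IsSpectrahedralShadow T) (hbS : Bornology.IsBounded S) (hbT : Bornology.IsBounded T) :
    IsSpectrahedralShadow (convexHull ℝ (S ∪ T)) := by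
  rcases S.eq_empty_or_nonempty with rfl | hneS
  · simpa [hT.convex.convexHull_eq] using hT
  rcases T.eq_empty_or_nonempty with rfl | hneT
  · simpa [hS.convex.convexHull_eq] using hS
  let fst := LinearMap.fst ℝ (E × ℝ) (E × ℝ)
  let snd := LinearMap.snd ℝ (E × ℝ) (E × ℝ)
  let total := LinearMap.fst ℝ E ℝ ∘ₗ (fst + snd)
  let weight := LinearMap.snd ℝ E ℝ ∘ₗ (fst + snd)
  convert ((((hS.cone hneS hbS).preimage fst.toAffineMap).inter
    ((hT.cone hneT hbT).preimage snd.toAffineMap)).inter (IsSpectrahedron.hyperplane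
      (weight.toAffineMap - AffineMap.const ℝ _ 1)).isSpectrahedralShadow).image total using 1
  rw [_root_.convexHull_union hneS hneT, hS.convex.convexHull_eq, hT.convex.convexHull_eq]
  ext x
  rw [mem_convexJoin]
  constructor
  · rintro ⟨y, hy, z, hz, s, t, hs, ht, hst, rfl⟩
    refine ⟨((s • y, s), (t • z, t)),
      ⟨⟨⟨hs, smul_mem_smul_set hy⟩, ⟨ht, smul_mem_smul_set hz⟩⟩, ?_⟩, rfl⟩
    simp [weight, fst, snd, hst]
  · rintro ⟨⟨⟨_, s⟩, ⟨_, t⟩⟩, ⟨⟨⟨hs, y, hy, hsy⟩, ⟨ht, z, hz, htz⟩⟩, hst⟩, rfl⟩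
    obtain rfl : s • y = _ := hsy
    obtain rfl : t • z = _ := htz
    refine ⟨y, hy, z, hz, s, t, hs, ht, ?_, rfl⟩
    simpa [weight, fst, snd, sub_eq_zero] using hst

theorem convexHull_biUnion [Module.Finite ℝ E] {ι : Type*} (s : Finset ι) {S : ι → Set E}
    (h : ∀ i ∈ s, IsSpectrahedralShadow (S i)) (hb : ∀ i ∈ s, Bornology.IsBounded (S i)) :
    IsSpectrahedralShadow (convexHull ℝ (⋃ i ∈ s, S i)) := by
  classical
  induction s using Finset.induction_on with
  | empty => simpa using of_subsingleton subsingleton_empty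
  | insert i s _ ih =>
    rw [Finset.forall_mem_insert] at h hb
    rw [Finset.set_biUnion_insert, ← convexHull_convexHull_union_right]
    exact h.1.convexHull_union (ih h.2 hb.2) hb.1
      (isBounded_convexHull.2 ((Bornology.isBounded_biUnion_finset s).2 hb.2))

theorem convexHull_of_locally [Module.Finite ℝ E] {K T : Set E} (hK : IsCompact K)
    (hKT : K ⊆ T) (hTK : T ⊆ convexHull ℝ K)
    (h : ∀ x ∈ K, ∃ U ∈ nhds x, IsSpectrahedralShadow (convexHull ℝ (T ∩ U))) :
    IsSpectrahedralShadow (convexHull ℝ T) := by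
  choose! U hU hshadow using h
  obtain ⟨s, hsK, hcover⟩ := hK.elim_nhds_subcover U hU
  have hb : Bornology.IsBounded T := (isBounded_convexHull.2 hK.isBounded).subset hTK
  convert convexHull_biUnion s (fun x hx => hshadow x (hsK x hx))
    (fun x _ => isBounded_convexHull.2 (hb.subset inter_subset_left)) using 1
  refine subset_antisymm ?_ (convexHull_min ?_ (convex_convexHull ℝ T))
  · refine convexHull_min (hTK.trans (convexHull_mono fun x hx => ?_)) (convex_convexHull ℝ _)
    obtain ⟨y, hy, hxy⟩ := mem_iUnion₂.1 (hcover hx)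
    exact mem_iUnion₂.2 ⟨y, hy, subset_convexHull ℝ _ ⟨hKT hx, hxy⟩⟩
  · exact iUnion₂_subset fun x _ => convexHull_mono inter_subset_left

end IsSpectrahedralShadow

end Gluing

theorem posSemidef_toMatrix'_iff {d : ℕ} (Q : QuadraticForm ℝ (Fin d → ℝ)) :
    Q.toMatrix'.PosSemidef ↔ ∀ w, 0 ≤ Q w := by
  rw [QuadraticForm.toMatrix', ← LinearMap.toMatrix₂_basisFun]
  refine LinearMap.isPosSemidef_iff_posSemidef_toMatrix (Pi.basisFun ℝ (Fin d)) |>.symm.trans ?_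
  refine ⟨fun h w => ?_, fun h => ⟨⟨fun x y => ?_⟩, ⟨fun w => ?_⟩⟩⟩
  · exact (h.nonneg w).trans_eq (QuadraticMap.associated_eq_self_apply ℝ Q w)
  · exact QuadraticForm.associated_isSymm ℝ Q |>.eq x y
  · exact (h w).trans_eq (QuadraticMap.associated_eq_self_apply ℝ Q w).symm

theorem IsSpectrahedralShadow.isSDPRepresentable {n : ℕ} {S : Set (Rn n)}
    (hS : IsSpectrahedralShadow S) : IsSDPRepresentable S := by
  obtain ⟨N, R, ⟨d, Q, rfl⟩, rfl⟩ := hS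
  let M : QuadraticForm ℝ (Fin d → ℝ) →ₗ[ℝ] Matrix (Fin d) (Fin d) ℝ :=
    (LinearMap.toMatrix₂' ℝ).toLinearMap ∘ₗ QuadraticMap.associatedHom ℝ
  have hM (q : QuadraticForm ℝ (Fin d → ℝ)) : (M q).IsSymm := q.isSymm_toMatrix'
  refine ⟨N, d, M (Q 0), fun i => M (Q.linear (EuclideanSpace.single i 1, 0)),
    fun j => M (Q.linear (0, Pi.single j 1)), hM _, fun _ => hM _, fun _ => hM _, ?_⟩
  have hpencil (x : Rn n) (u : Fin N → ℝ) :
      M (Q 0) + ∑ i, x i • M (Q.linear (EuclideanSpace.single i 1, 0)) +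
        ∑ j, u j • M (Q.linear (0, Pi.single j 1)) = M (Q (x, u)) := by
    have hx : (x, (0 : Fin N → ℝ)) = ∑ i, x i • (EuclideanSpace.single i (1 : ℝ), 0) := by
      ext <;> simp [Prod.fst_sum, Prod.snd_sum, Pi.single_apply]
    have hu : ((0 : Rn n), u) = ∑ j, u j • (0, Pi.single j (1 : ℝ)) := by
      ext <;> simp [Prod.fst_sum, Prod.snd_sum, Pi.single_apply]
    have hxu : Q (x, u) = Q 0 + Q.linear (x, 0) + Q.linear (0, u) := by
      rw [add_assoc, ← map_add, Prod.mk_add_mk, add_zero, zero_add, add_comm]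
      exact congrFun Q.decomp (x, u)
    rw [hxu, hx, hu]
    simp only [map_add, map_sum, map_smul]
  ext x
  simp only [hpencil, mem_ofPred_eq]
  refine Iff.trans ?_ (exists_congr fun u => (posSemidef_toMatrix'_iff (Q (x, u))).symm)
  simp

/-! ### Polynomial calculus -/

section PolynomialCalculus

variable {n : ℕ}

theorem continuous_peval (p : MvPolynomial (Fin n) ℝ) : Continuous (peval p) :=
  p.continuous_eval.comp (by fun_prop)

theorem pgrad_C (a : ℝ) (u : Rn n) : pgrad (C a) u = 0 := by
  ext i
  simp [pgrad]

theorem pgrad_add (p q : MvPolynomial (Fin n) ℝ) (u : Rn n) :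
    pgrad (p + q) u = pgrad p u + pgrad q u := by
  ext i
  simp [pgrad]

theorem pgrad_mul_X (p : MvPolynomial (Fin n) ℝ) (k : Fin n) (u : Rn n) :
    pgrad (p * X k) u = u k • pgrad p u + peval p u • Pi.single k 1 := by
  ext i
  obtain rfl | hik := eq_or_ne i k
  · simp [pgrad, peval, mul_comm, add_comm]
  · simp [pgrad, peval, pderiv_X_of_ne hik.symm, hik]

theorem phess_C (a : ℝ) (u : Rn n) : phess (C a) u = 0 := by
  ext i j
  simp [phess]

theorem phess_add (p q : MvPolynomial (Fin n) ℝ) (u : Rn n) :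
    phess (p + q) u = phess p u + phess q u := by
  ext i j
  simp [phess]

theorem phess_mul_X (p : MvPolynomial (Fin n) ℝ) (k : Fin n) (u : Rn n) :
    phess (p * X k) u = u k • phess p u + Matrix.vecMulVec (pgrad p u) (Pi.single k 1) +
      Matrix.vecMulVec (Pi.single k 1) (pgrad p u) := by
  ext i j
  have hX (l : Fin n) : pderiv l (X k : MvPolynomial (Fin n) ℝ) =
      C ((Pi.single k 1 : Fin n → ℝ) l) := by
    obtain rfl | hlk := eq_or_ne l k
    · simp
    · simp [pderiv_X_of_ne hlk.symm, hlk]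
  simp only [phess, pgrad, Matrix.vecMulVec_apply, Matrix.of_apply, Matrix.add_apply,
    Matrix.smul_apply, pderiv_mul, hX, map_add, map_mul, pderiv_C, map_zero, eval_X, eval_C,
    smul_eq_mul]
  ring

theorem hasDerivAt_peval_add_smul (p : MvPolynomial (Fin n) ℝ) (v e : Rn n) (t : ℝ) :
    HasDerivAt (fun t : ℝ => peval p (v + t • e)) (pgrad p (v + t • e) ⬝ᵥ e) t := by
  induction p using MvPolynomial.induction_on with
  | C a => simpa [peval, pgrad_C] using hasDerivAt_const t a
  | add p q hp hq =>
    simp only [peval, map_add, pgrad_add, add_dotProduct]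
    exact hp.add hq
  | mul_X p k hp =>
    have hX : HasDerivAt (fun t : ℝ => (v + t • e) k) (e k) t := by
      simpa using ((hasDerivAt_id t).mul_const (e k)).const_add (v k)
    simp only [peval, map_mul, eval_X]
    refine (hp.mul hX).congr_deriv ?_
    simp [pgrad_mul_X, add_dotProduct, mul_comm]

theorem hasDerivAt_pgrad_add_smul (p : MvPolynomial (Fin n) ℝ) (v e : Rn n) (t : ℝ) :
    HasDerivAt (fun t : ℝ => pgrad p (v + t • e) ⬝ᵥ e)
      (e ⬝ᵥ (phess p (v + t • e)).mulVec e) t := by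
  have hsum : HasDerivAt (fun t : ℝ => ∑ i, pgrad p (v + t • e) i * e i)
      (∑ i, (pgrad (pderiv i p) (v + t • e) ⬝ᵥ e) * e i) t :=
    .fun_sum fun i _ => (hasDerivAt_peval_add_smul (pderiv i p) v e t).mul_const (e i)
  refine hsum.congr_deriv ?_
  rw [Matrix.dotProduct_mulVec, dotProduct_comm]
  simp only [dotProduct, Matrix.vecMul, phess, pgrad, Matrix.of_apply, mul_comm]

theorem strictConcaveOn_peval_add_smul {B : Set (Rn n)} {p : MvPolynomial (Fin n) ℝ}
    (hB : Convex ℝ B) (hp : ∀ x ∈ B, (-phess p x).PosDef) {v x : Rn n} (hv : v ∈ B) (hx : x ∈ B)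
    (hne : v ≠ x) : StrictConcaveOn ℝ (Icc (0 : ℝ) 1) fun t => peval p (v + t • (x - v)) := by
  have hderiv : deriv (fun t : ℝ => peval p (v + t • (x - v))) =
      fun t => pgrad p (v + t • (x - v)) ⬝ᵥ (x - v).ofLp :=
    funext fun t => (hasDerivAt_peval_add_smul p v (x - v) t).deriv
  refine strictConcaveOn_of_deriv2_neg' (convex_Icc 0 1)
    ((continuous_peval p).comp (by fun_prop)).continuousOn fun t ht => ?_
  rw [Function.iterate_succ_apply, Function.iterate_one, hderiv,
    (hasDerivAt_pgrad_add_smul p v (x - v) t).deriv]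
  have hneg := (hp _ (hB.add_smul_sub_mem hv hx ht)).dotProduct_mulVec_pos
    (x := (x - v).ofLp) (by rwa [ne_eq, WithLp.ofLp_eq_zero, sub_eq_zero, eq_comm])
  simpa [Matrix.neg_mulVec] using hneg

theorem strictConcaveOn_peval {B : Set (Rn n)} {p : MvPolynomial (Fin n) ℝ} (hB : Convex ℝ B)
    (hp : ∀ x ∈ B, (-phess p x).PosDef) : StrictConcaveOn ℝ B (peval p) := by
  refine ⟨hB, fun x hx y hy hxy a b ha hb hab => ?_⟩
  have hline := (strictConcaveOn_peval_add_smul hB hp hx hy hxy).2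
    (left_mem_Icc.2 zero_le_one) (right_mem_Icc.2 zero_le_one) zero_ne_one ha hb hab
  have hmid : a • x + b • y = x + b • (y - x) := by
    rw [eq_sub_of_add_eq hab]
    module
  simpa [hmid] using hline

theorem peval_lt_of_forall_posDef_neg_phess {B : Set (Rn n)} {p : MvPolynomial (Fin n) ℝ}
    (hB : Convex ℝ B) (hp : ∀ x ∈ B, (-phess p x).PosDef) {v x : Rn n} (hv : v ∈ B) (hx : x ∈ B)
    (hne : v ≠ x) : peval p x < peval p v + pgrad p v ⬝ᵥ (x - v).ofLp := by
  have hslope := (strictConcaveOn_peval_add_smul hB hp hv hx hne).slope_lt_of_hasDerivAt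
    (left_mem_Icc.2 zero_le_one) (right_mem_Icc.2 zero_le_one) zero_lt_one
    (hasDerivAt_peval_add_smul p v (x - v) 0)
  simp only [slope_def_field, one_smul, zero_smul, add_zero, add_sub_cancel, sub_zero,
    div_one] at hslope
  linarith

theorem peval_ballPoly (u : Rn n) (δ : ℝ) (x : Rn n) :
    peval (ballPoly u δ) x = δ ^ 2 - ‖x - u‖ ^ 2 := by
  simp [peval, ballPoly, EuclideanSpace.norm_sq_eq]

theorem peval_ballPoly_nonneg_iff {u : Rn n} {δ : ℝ} (hδ : 0 ≤ δ) {x : Rn n} :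
    0 ≤ peval (ballPoly u δ) x ↔ x ∈ closedBall u δ := by
  rw [peval_ballPoly, mem_closedBall, dist_eq_norm, sub_nonneg, sq_le_sq₀ (norm_nonneg _) hδ]

theorem pderiv_ballPoly (u : Rn n) (δ : ℝ) (i : Fin n) :
    pderiv i (ballPoly u δ) = (2 : ℝ) • (C (u i) - X i) := by
  have hsq (k : Fin n) : pderiv i ((X k - C (u k)) ^ 2 : MvPolynomial (Fin n) ℝ) =
      if i = k then (2 : ℝ) • (X i - C (u i)) else 0 := by
    split_ifs with hik
    · subst hik
      rw [pderiv_pow]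
      simp [two_smul, two_mul]
    · rw [pderiv_pow]
      simp [pderiv_X_of_ne (Ne.symm hik)]
  simp only [ballPoly, map_sub, pderiv_C, map_sum, hsq, Finset.sum_ite_eq, Finset.mem_univ, if_true]
  module

theorem neg_phess_ballPoly (u : Rn n) (δ : ℝ) (x : Rn n) :
    -phess (ballPoly u δ) x = (2 : ℝ) • (1 : Matrix (Fin n) (Fin n) ℝ) := by
  ext i j
  obtain rfl | hij := eq_or_ne i j
  · simp [phess, pderiv_ballPoly]
  · simp [phess, pderiv_ballPoly, hij]

end PolynomialCalculus

/-! ### Pseudo-expectations -/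

section PseudoExpectation

open scoped Topology

variable {n : ℕ}

/-- The `k`-th coordinate polynomial centered at `v`. -/
def centered (v : Rn n) (k : Fin n) : MvPolynomial (Fin n) ℝ := X k - C (v k)

/-- A truncated pseudo-expectation on the box of half-width `ε` around `x₀`: a normalized linear
functional on polynomials which behaves like the expectation of a probability measure on the box as
far as this can be tested by (localized) squares of polynomials of degree at most `d`. -/
structure IsPseudoExpectation (x₀ : Rn n) (ε : ℝ) (d : ℕ)
    (L : Module.Dual ℝ (MvPolynomial (Fin n) ℝ)) : Prop where
  map_one : L 1 = 1
  sq_nonneg : ∀ w, w.totalDegree ≤ d → 0 ≤ L (w ^ 2)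
  box_nonneg : ∀ k w, w.totalDegree ≤ d → 0 ≤ L ((C (ε ^ 2) - centered x₀ k ^ 2) * w ^ 2)

/-- The mean of a linear functional on polynomials, i.e. its values on the coordinates. -/
def mean : Module.Dual ℝ (MvPolynomial (Fin n) ℝ) →ₗ[ℝ] Rn n :=
  (WithLp.linearEquiv 2 ℝ (Fin n → ℝ)).symm.toLinearMap ∘ₗ
    LinearMap.pi fun k => Module.Dual.eval ℝ _ (X k)

@[simp] theorem mean_apply (L : Module.Dual ℝ (MvPolynomial (Fin n) ℝ)) (k : Fin n) :
    mean L k = L (X k) := rfl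

/-- The covariance matrix of a linear functional on polynomials. -/
def cov (L : Module.Dual ℝ (MvPolynomial (Fin n) ℝ)) : Matrix (Fin n) (Fin n) ℝ :=
  Matrix.of fun i j => L (centered (mean L) i * centered (mean L) j)

/-- Multiplication by the polynomial `s`, of degree at most `e`, is bounded by `b` for the seminorm
`w ↦ √(L (w ^ 2))` on those `w` for which `s * w` has degree at most `d`. -/
structure IsMulBounded (L : Module.Dual ℝ (MvPolynomial (Fin n) ℝ)) (d e : ℕ) (b : ℝ)
    (s : MvPolynomial (Fin n) ℝ) : Prop where
  totalDegree_le : s.totalDegree ≤ e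
  nonneg : 0 ≤ b
  bound : ∀ w, e + w.totalDegree ≤ d → L ((s * w) ^ 2) ≤ b ^ 2 * L (w ^ 2)

theorem map_C_mul (L : Module.Dual ℝ (MvPolynomial (Fin n) ℝ)) (a : ℝ)
    (p : MvPolynomial (Fin n) ℝ) : L (C a * p) = a * L p := by
  rw [C_mul', map_smul, smul_eq_mul]

theorem totalDegree_centered_le (v : Rn n) (k : Fin n) : (centered v k).totalDegree ≤ 1 :=
  (totalDegree_sub_C_le _ _).trans_eq (totalDegree_X k)

theorem isMulBounded_one (L : Module.Dual ℝ (MvPolynomial (Fin n) ℝ)) (d : ℕ) :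
    IsMulBounded L d 0 1 1 :=
  ⟨totalDegree_one.le, zero_le_one, fun w _ => by simp⟩

theorem IsMulBounded.mul {L : Module.Dual ℝ (MvPolynomial (Fin n) ℝ)} {d e e' : ℕ} {b b' : ℝ}
    {s s' : MvPolynomial (Fin n) ℝ} (hs : IsMulBounded L d e b s)
    (hs' : IsMulBounded L d e' b' s') : IsMulBounded L d (e + e') (b * b') (s * s') where
  totalDegree_le := (totalDegree_mul _ _).trans (add_le_add hs.totalDegree_le hs'.totalDegree_le)
  nonneg := mul_nonneg hs.nonneg hs'.nonneg
  bound w hw := by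
    have hdeg : (s' * w).totalDegree ≤ e' + w.totalDegree :=
      (totalDegree_mul _ _).trans (by grw [hs'.totalDegree_le])
    calc L ((s * s' * w) ^ 2) = L ((s * (s' * w)) ^ 2) := by rw [mul_assoc]
      _ ≤ b ^ 2 * L ((s' * w) ^ 2) := hs.bound _ (by omega)
      _ ≤ b ^ 2 * (b' ^ 2 * L (w ^ 2)) := by gcongr; exact hs'.bound _ (by omega)
      _ = (b * b') ^ 2 * L (w ^ 2) := by ring

namespace IsPseudoExpectation

variable {x₀ : Rn n} {ε : ℝ} {d : ℕ} {L : Module.Dual ℝ (MvPolynomial (Fin n) ℝ)}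

theorem map_C (hL : IsPseudoExpectation x₀ ε d L) (a : ℝ) : L (C a) = a := by
  simpa [hL.map_one] using map_C_mul L a 1

theorem map_centered (hL : IsPseudoExpectation x₀ ε d L) (v : Rn n) (k : Fin n) :
    L (centered v k) = mean L k - v k := by
  rw [centered, map_sub, hL.map_C, mean_apply]

theorem sq_map_mul_le (hL : IsPseudoExpectation x₀ ε d L) {a b : MvPolynomial (Fin n) ℝ}
    (ha : a.totalDegree ≤ d) (hb : b.totalDegree ≤ d) :
    L (a * b) ^ 2 ≤ L (a ^ 2) * L (b ^ 2) := by
  have hquad (t : ℝ) : 0 ≤ L (b ^ 2) * (t * t) + 2 * L (a * b) * t + L (a ^ 2) := by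
    have hdeg : (a + C t * b).totalDegree ≤ d :=
      (totalDegree_add _ _).trans (max_le ha ((totalDegree_mul _ _).trans (by simpa using hb)))
    have hexpand : (a + C t * b) ^ 2 = a ^ 2 + C (2 * t) * (a * b) + C (t * t) * b ^ 2 := by
      simp only [C_mul, map_ofNat]
      ring
    have := hL.sq_nonneg _ hdeg
    rw [hexpand, map_add, map_add, map_C_mul, map_C_mul] at this
    linarith
  have := discrim_le_zero hquad
  rw [discrim] at this
  linarith

theorem isMulBounded_centered (hL : IsPseudoExpectation x₀ ε d L) (hε : 0 ≤ ε) (k : Fin n) :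
    IsMulBounded L d 1 ε (centered x₀ k) where
  totalDegree_le := totalDegree_centered_le x₀ k
  nonneg := hε
  bound w hw := by
    have := hL.box_nonneg k w (by omega)
    rw [sub_mul, map_sub, map_C_mul, ← mul_pow] at this
    linarith

theorem abs_mean_sub_le (hL : IsPseudoExpectation x₀ ε d L) (hε : 0 ≤ ε) (hd : 1 ≤ d) (k : Fin n) :
    |mean L k - x₀ k| ≤ ε := by
  refine abs_le_of_sq_le_sq ?_ hε
  calc (mean L k - x₀ k) ^ 2 = L (centered x₀ k * 1) ^ 2 := by rw [mul_one, hL.map_centered]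
    _ ≤ L (centered x₀ k ^ 2) * L (1 ^ 2) :=
      hL.sq_map_mul_le ((totalDegree_centered_le x₀ k).trans hd) (by simp)
    _ = L ((centered x₀ k * 1) ^ 2) := by rw [mul_one, one_pow, hL.map_one, mul_one]
    _ ≤ ε ^ 2 * L (1 ^ 2) := (hL.isMulBounded_centered hε k).bound 1 (by simpa)
    _ = ε ^ 2 := by rw [one_pow, hL.map_one, mul_one]

theorem posSemidef_cov (hL : IsPseudoExpectation x₀ ε d L) (hd : 1 ≤ d) : (cov L).PosSemidef := by
  refine Matrix.PosSemidef.of_dotProduct_mulVec_nonneg ?_ fun w => ?_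
  · ext i j
    simp [cov, mul_comm]
  have hsq : w ⬝ᵥ (cov L).mulVec w = L ((∑ i, C (w i) * centered (mean L) i) ^ 2) := by
    simp only [dotProduct, Matrix.mulVec, cov, Matrix.of_apply, Finset.mul_sum, sq, Finset.sum_mul,
      map_sum]
    rw [Finset.sum_comm]
    refine Finset.sum_congr rfl fun i _ => Finset.sum_congr rfl fun j _ => ?_
    rw [mul_mul_mul_comm, ← C_mul, map_C_mul]
    ring
  rw [star_trivial, hsq]
  refine hL.sq_nonneg _ (totalDegree_finsetSum_le fun i _ => ?_)
  refine (totalDegree_mul _ _).trans ?_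
  rw [totalDegree_C, zero_add]
  exact (totalDegree_centered_le _ i).trans hd

theorem cov_diag_le_trace (hL : IsPseudoExpectation x₀ ε d L) (hd : 1 ≤ d) (i : Fin n) :
    cov L i i ≤ (cov L).trace :=
  Finset.single_le_sum (f := fun i => cov L i i)
    (fun _ _ => (hL.posSemidef_cov hd).diag_nonneg) (Finset.mem_univ i)

theorem abs_map_mul_centered_mul_centered_le (hL : IsPseudoExpectation x₀ ε d L) {e : ℕ} {b : ℝ}
    {s : MvPolynomial (Fin n) ℝ} (hs : IsMulBounded L d e b s) (hd : e + 1 ≤ d) (i j : Fin n) :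
    |L (s * (centered (mean L) i * centered (mean L) j))| ≤ b * (cov L).trace := by
  have hcov := hL.posSemidef_cov (by omega)
  refine abs_le_of_sq_le_sq ?_ (mul_nonneg hs.nonneg hcov.trace_nonneg)
  set Y := centered (mean L)
  have hY (k : Fin n) : (Y k).totalDegree ≤ 1 := totalDegree_centered_le _ k
  have hsY : (s * Y i).totalDegree ≤ d := by
    grw [totalDegree_mul, hs.totalDegree_le, hY, hd]
  calc L (s * (Y i * Y j)) ^ 2 = L (s * Y i * Y j) ^ 2 := by rw [mul_assoc]
    _ ≤ L ((s * Y i) ^ 2) * L (Y j ^ 2) := hL.sq_map_mul_le hsY ((hY j).trans (by omega))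
    _ ≤ b ^ 2 * L (Y i ^ 2) * L (Y j ^ 2) := by
      have := hs.bound (Y i) (by grw [hY, hd])
      have : 0 ≤ L (Y j ^ 2) := hL.sq_nonneg _ ((hY j).trans (by omega))
      gcongr
    _ = b ^ 2 * cov L i i * cov L j j := by simp only [cov, Matrix.of_apply, sq]; rfl
    _ ≤ b ^ 2 * (cov L).trace * (cov L).trace := by
      have : 0 ≤ cov L j j := hcov.diag_nonneg
      have : 0 ≤ (cov L).trace := hcov.trace_nonneg
      gcongr <;> exact hL.cov_diag_le_trace (by omega) _
    _ = (b * (cov L).trace) ^ 2 := by ring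

end IsPseudoExpectation

/-- The remainder of the first-order Taylor expansion of `p` at `v`. -/
def taylorRem (v : Rn n) (p : MvPolynomial (Fin n) ℝ) : MvPolynomial (Fin n) ℝ :=
  p - C (peval p v) - ∑ i, C (pgrad p v i) * centered v i

theorem taylorRem_C (v : Rn n) (a : ℝ) : taylorRem v (C a) = 0 := by
  simp [taylorRem, peval, pgrad_C]

theorem taylorRem_add (v : Rn n) (p q : MvPolynomial (Fin n) ℝ) :
    taylorRem v (p + q) = taylorRem v p + taylorRem v q := by
  simp only [taylorRem, pgrad_add, Pi.add_apply, add_mul, Finset.sum_add_distrib, peval,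
    map_add]
  ring

theorem taylorRem_mul_X (x₀ v : Rn n) (p : MvPolynomial (Fin n) ℝ) (k : Fin n) :
    taylorRem v (p * X k) = centered x₀ k * taylorRem v p + C (x₀ k) * taylorRem v p +
      ∑ i, C (pgrad p v i) * (centered v i * centered v k) := by
  have hgrad : ∑ i, C (pgrad (p * X k) v i) * centered v i =
      C (v k) * ∑ i, C (pgrad p v i) * centered v i + C (peval p v) * centered v k := by
    simp only [pgrad_mul_X, Pi.add_apply, Pi.smul_apply, smul_eq_mul, C_add, C_mul, add_mul,
      Finset.sum_add_distrib, Finset.mul_sum, mul_assoc]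
    simp [Pi.single_apply, apply_ite]
  have hcross : ∑ i, C (pgrad p v i) * (centered v i * centered v k) =
      (∑ i, C (pgrad p v i) * centered v i) * centered v k := by
    simp only [Finset.sum_mul, mul_assoc]
  have hX : peval (p * X k) v = peval p v * v k := by simp [peval]
  rw [hcross, taylorRem, hgrad, hX, taylorRem]
  simp only [centered, C_mul]
  ring

theorem IsPseudoExpectation.map_taylorRem {x₀ : Rn n} {ε : ℝ} {d : ℕ}
    {L : Module.Dual ℝ (MvPolynomial (Fin n) ℝ)} (hL : IsPseudoExpectation x₀ ε d L)
    (p : MvPolynomial (Fin n) ℝ) :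
    L (taylorRem (mean L) p) = L p - peval p (mean L) := by
  simp [taylorRem, map_C_mul, hL.map_C, hL.map_centered]

/-- The filter of pseudo-expectations `L` on boxes around `x₀`, as the half-width `ε` tends to zero
and the degree `d` to infinity; its elements are the triples `(ε, d, L)`. -/
def localization (x₀ : Rn n) : Filter (ℝ × ℕ × Module.Dual ℝ (MvPolynomial (Fin n) ℝ)) :=
  comap (fun z => (z.1, z.2.1)) (𝓝[>] 0 ×ˢ atTop) ⊓ 𝓟 {z | IsPseudoExpectation x₀ z.1 z.2.1 z.2.2}

theorem eventually_localization_iff {x₀ : Rn n}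
    {P : ℝ × ℕ × Module.Dual ℝ (MvPolynomial (Fin n) ℝ) → Prop} :
    (∀ᶠ z in localization x₀, P z) ↔ ∀ᶠ q : ℝ × ℕ in 𝓝[>] 0 ×ˢ atTop,
      ∀ L, IsPseudoExpectation x₀ q.1 q.2 L → P (q.1, q.2, L) := by
  rw [localization, eventually_inf_principal, eventually_comap]
  refine eventually_congr (.of_forall fun q => ⟨fun h L => h (q.1, q.2, L) rfl, ?_⟩)
  rintro h ⟨ε, d, L⟩ rfl
  exact h L

theorem eventually_isPseudoExpectation (x₀ : Rn n) :
    ∀ᶠ z in localization x₀, IsPseudoExpectation x₀ z.1 z.2.1 z.2.2 :=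
  mem_inf_of_right (mem_principal_self _)

theorem tendsto_localization (x₀ : Rn n) :
    Tendsto (fun z => (z.1, z.2.1)) (localization x₀) (𝓝[>] 0 ×ˢ atTop) :=
  tendsto_comap.mono_left inf_le_left

theorem tendsto_localization_width (x₀ : Rn n) :
    Tendsto (fun z => z.1) (localization x₀) (𝓝 0) :=
  (tendsto_fst.comp (tendsto_localization x₀)).mono_right nhdsWithin_le_nhds

theorem eventually_localization_width_pos (x₀ : Rn n) : ∀ᶠ z in localization x₀, 0 < z.1 :=
  (tendsto_fst.comp (tendsto_localization x₀)).eventually self_mem_nhdsWithin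

theorem tendsto_localization_degree (x₀ : Rn n) :
    Tendsto (fun z => z.2.1) (localization x₀) atTop :=
  tendsto_snd.comp (tendsto_localization x₀)

theorem eventually_isMulBounded_centered (x₀ : Rn n) (k : Fin n) :
    ∀ᶠ z in localization x₀, IsMulBounded z.2.2 z.2.1 1 z.1 (centered x₀ k) := by
  filter_upwards [eventually_isPseudoExpectation x₀, eventually_localization_width_pos x₀]
    with z hz hε
  exact hz.isMulBounded_centered hε.le k

theorem tendsto_mean_localization (x₀ : Rn n) :
    Tendsto (fun z => mean z.2.2) (localization x₀) (𝓝 x₀) := by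
  rw [(PiLp.homeomorph 2 _).isInducing.tendsto_nhds_iff, tendsto_pi_nhds]
  intro k
  rw [tendsto_iff_norm_sub_tendsto_zero]
  refine squeeze_zero' (.of_forall fun _ => norm_nonneg _) ?_ (tendsto_localization_width x₀)
  filter_upwards [eventually_isPseudoExpectation x₀, eventually_localization_width_pos x₀,
    (tendsto_localization_degree x₀).eventually_ge_atTop 1] with z hz hε hd
  exact hz.abs_mean_sub_le hε.le hd k

theorem isBigO_map_mul_centered_mul_centered {x₀ : Rn n} {s : MvPolynomial (Fin n) ℝ} {e : ℕ}
    {b : ℝ × ℕ × Module.Dual ℝ (MvPolynomial (Fin n) ℝ) → ℝ}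
    (hs : ∀ᶠ z in localization x₀, IsMulBounded z.2.2 z.2.1 e (b z) s) (i j : Fin n) :
    (fun z => z.2.2 (s * (centered (mean z.2.2) i * centered (mean z.2.2) j)))
      =O[localization x₀] fun z => b z * (cov z.2.2).trace := by
  refine .of_bound 1 ?_
  filter_upwards [eventually_isPseudoExpectation x₀, hs,
    (tendsto_localization_degree x₀).eventually_ge_atTop (e + 1)] with z hz hs hd
  rw [one_mul]
  exact (hz.abs_map_mul_centered_mul_centered_le hs hd i j).trans (le_abs_self _)

theorem tendsto_pgrad_mean (x₀ : Rn n) (p : MvPolynomial (Fin n) ℝ) (i : Fin n) :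
    Tendsto (fun z => pgrad p (mean z.2.2) i) (localization x₀) (𝓝 (pgrad p x₀ i)) :=
  ((continuous_peval (pderiv i p)).tendsto x₀).comp (tendsto_mean_localization x₀)

theorem isBigO_map_mul_taylorRem {x₀ : Rn n} (p : MvPolynomial (Fin n) ℝ) :
    ∀ {s : MvPolynomial (Fin n) ℝ} {e : ℕ}
      {b : ℝ × ℕ × Module.Dual ℝ (MvPolynomial (Fin n) ℝ) → ℝ},
      (∀ᶠ z in localization x₀, IsMulBounded z.2.2 z.2.1 e (b z) s) →
      (fun z => z.2.2 (s * taylorRem (mean z.2.2) p))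
        =O[localization x₀] fun z => b z * (cov z.2.2).trace := by
  induction p using MvPolynomial.induction_on with
  | C a =>
    intro s e b _
    simpa only [taylorRem_C, mul_zero, map_zero] using Asymptotics.isBigO_zero _ _
  | add p q hp hq =>
    intro s e b hs
    simpa only [taylorRem_add, mul_add, map_add] using (hp hs).add (hq hs)
  | mul_X p k hp =>
    intro s e b hs
    have hcentered : (fun z => z.2.2 (s * centered x₀ k * taylorRem (mean z.2.2) p))
        =O[localization x₀] fun z => b z * (cov z.2.2).trace := by
      have hsk : ∀ᶠ z in localization x₀,
          IsMulBounded z.2.2 z.2.1 (e + 1) (b z * z.1) (s * centered x₀ k) := by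
        filter_upwards [hs, eventually_isMulBounded_centered x₀ k] with z hs hk
        exact hs.mul hk
      refine (hp hsk).trans ?_
      have hε := (tendsto_localization_width x₀).isBigO_one ℝ
      simpa using ((Asymptotics.isBigO_refl b _).mul hε).mul
        (Asymptotics.isBigO_refl (fun z => (cov z.2.2).trace) _)
    have hcross (i : Fin n) : (fun z => pgrad p (mean z.2.2) i *
        z.2.2 (s * (centered (mean z.2.2) i * centered (mean z.2.2) k)))
        =O[localization x₀] fun z => b z * (cov z.2.2).trace := by
      simpa using ((tendsto_pgrad_mean x₀ p i).isBigO_one ℝ).mul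
        (isBigO_map_mul_centered_mul_centered hs i k)
    have hsum := (hcentered.add ((hp hs).const_mul_left (x₀ k))).add
      (Asymptotics.IsBigO.sum fun i (_ : i ∈ Finset.univ) => hcross i)
    refine hsum.congr_left fun z => ?_
    simp only [Finset.sum_apply, taylorRem_mul_X x₀, mul_add, Finset.mul_sum, map_add, map_sum,
      mul_assoc, mul_left_comm s (C _), map_C_mul]

theorem map_taylorRem_mul_X (x₀ : Rn n) (L : Module.Dual ℝ (MvPolynomial (Fin n) ℝ))
    (p : MvPolynomial (Fin n) ℝ) (k : Fin n) :
    L (taylorRem (mean L) (p * X k)) = L (centered x₀ k * taylorRem (mean L) p) +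
      x₀ k * L (taylorRem (mean L) p) + ∑ i, pgrad p (mean L) i * cov L i k := by
  simp only [taylorRem_mul_X x₀, map_add, map_sum, map_C_mul, cov, Matrix.of_apply]

theorem trace_phess_mul_X_mul_cov (x₀ : Rn n) (L : Module.Dual ℝ (MvPolynomial (Fin n) ℝ))
    (p : MvPolynomial (Fin n) ℝ) (k : Fin n) :
    (phess (p * X k) x₀ * cov L).trace =
      x₀ k * (phess p x₀ * cov L).trace + 2 * ∑ i, pgrad p x₀ i * cov L i k := by
  have hsymm (i : Fin n) : cov L k i = cov L i k := by simp [cov, mul_comm]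
  simp only [phess_mul_X, add_mul, Matrix.trace_add, Matrix.smul_mul, Matrix.trace_smul,
    Matrix.vecMulVec_mul, Matrix.trace_vecMulVec, smul_eq_mul]
  simp only [single_one_dotProduct, Matrix.single_one_vecMul]
  simp [dotProduct, Matrix.vecMul, hsymm, two_mul, add_assoc]

/-- On a box of half-width `ε`, multiplication by a centered coordinate is bounded by `ε`, so the
terms of order three and higher in the Taylor expansion are negligible against `tr (cov L)`. -/
theorem isLittleO_map_taylorRem_sub (x₀ : Rn n) (p : MvPolynomial (Fin n) ℝ) :
    (fun z => 2 * z.2.2 (taylorRem (mean z.2.2) p) - (phess p x₀ * cov z.2.2).trace)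
      =o[localization x₀] fun z => (cov z.2.2).trace := by
  induction p using MvPolynomial.induction_on with
  | C a => simpa only [taylorRem_C, phess_C, map_zero, mul_zero, zero_mul, Matrix.trace_zero,
      sub_zero] using Asymptotics.isLittleO_zero _ _
  | add p q hp hq =>
    refine (hp.add hq).congr_left fun z => ?_
    simp only [taylorRem_add, phess_add, map_add, add_mul, Matrix.trace_add]
    ring
  | mul_X p k hp =>
    have hcentered : (fun z => z.2.2 (centered x₀ k * taylorRem (mean z.2.2) p))
        =o[localization x₀] fun z => (cov z.2.2).trace := by
      have hε := (Asymptotics.isLittleO_one_iff ℝ).2 (tendsto_localization_width x₀)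
      refine (isBigO_map_mul_taylorRem p
        (eventually_isMulBounded_centered x₀ k)).trans_isLittleO ?_
      simpa using hε.mul_isBigO (Asymptotics.isBigO_refl (fun z => (cov z.2.2).trace) _)
    have hcross (i : Fin n) : (fun z => (pgrad p (mean z.2.2) i - pgrad p x₀ i) * cov z.2.2 i k)
        =o[localization x₀] fun z => (cov z.2.2).trace := by
      have hcov := isBigO_map_mul_centered_mul_centered (x₀ := x₀)
        (.of_forall fun z => isMulBounded_one z.2.2 z.2.1) i k
      have hgrad := (Asymptotics.isLittleO_one_iff ℝ).2
        (tendsto_sub_nhds_zero_iff.2 (tendsto_pgrad_mean x₀ p i))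
      simpa [cov] using hgrad.mul_isBigO hcov
    have hsum := ((hcentered.const_mul_left 2).add (hp.const_mul_left (x₀ k))).add
      ((Asymptotics.IsLittleO.sum fun i (_ : i ∈ Finset.univ) => hcross i).const_mul_left 2)
    refine hsum.congr_left fun z => ?_
    rw [map_taylorRem_mul_X x₀, trace_phess_mul_X_mul_cov]
    simp only [Finset.sum_apply, sub_mul, Finset.sum_sub_distrib]
    ring

open scoped MatrixOrder Matrix.Norms.L2Operator in
theorem trace_mul_nonneg {ι : Type*} [Fintype ι] {A B : Matrix ι ι ℝ} (hA : A.PosSemidef)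
    (hB : B.PosSemidef) : 0 ≤ (A * B).trace := by
  classical
  obtain ⟨R, rfl⟩ := CStarAlgebra.nonneg_iff_eq_star_mul_self.1 hA.nonneg
  rw [Matrix.star_eq_conjTranspose, Matrix.mul_assoc, Matrix.trace_mul_comm]
  exact (hB.mul_mul_conjTranspose_same R).trace_nonneg

open scoped MatrixOrder in
theorem exists_pos_posSemidef_sub_smul_one {ι : Type*} [Finite ι] [DecidableEq ι]
    {A : Matrix ι ι ℝ} (hA : A.PosDef) :
    ∃ m > 0, (A - (m : ℝ) • 1).PosSemidef := by
  have := Fintype.ofFinite ι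
  obtain _ | _ := isEmpty_or_nonempty ι
  · refine ⟨1, one_pos, ?_⟩
    rw [Subsingleton.elim (A - _) 0]
    exact .zero
  · have hspec : ∀ t ∈ spectrum ℝ A, 0 < t := fun t ht =>
      (Matrix.isStrictlyPositive_iff_posDef.2 hA).spectrum_pos ht
    obtain ⟨m, hm, hle⟩ := (CFC.exists_pos_algebraMap_le_iff (a := A) hA.isHermitian).2 hspec
    exact ⟨m, hm, by rwa [Algebra.algebraMap_eq_smul_one] at hle⟩

/-- Jensen's inequality: the Hessian term of the expansion of `L p` around the mean is at most a
negative multiple of `tr (cov L)`, which absorbs the remaining terms. -/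
theorem eventually_map_le_peval_mean {x₀ : Rn n} {p : MvPolynomial (Fin n) ℝ}
    (hp : (-phess p x₀).PosDef) :
    ∀ᶠ z in localization x₀, z.2.2 p ≤ peval p (mean z.2.2) := by
  obtain ⟨m, hm, hpm⟩ := exists_pos_posSemidef_sub_smul_one hp
  filter_upwards [eventually_isPseudoExpectation x₀, (isLittleO_map_taylorRem_sub x₀ p).def hm,
    (tendsto_localization_degree x₀).eventually_ge_atTop 1] with z hz hrem hd
  have hcov := hz.posSemidef_cov hd
  have hhess := trace_mul_nonneg hpm hcov
  rw [sub_mul, neg_mul, Matrix.smul_mul, one_mul, Matrix.trace_sub, Matrix.trace_neg,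
    Matrix.trace_smul, smul_eq_mul] at hhess
  rw [Real.norm_eq_abs, Real.norm_of_nonneg hcov.trace_nonneg, hz.map_taylorRem] at hrem
  linarith [le_of_abs_le hrem]

end PseudoExpectation

/-! ### Local shadows -/

section LocalShadow

open scoped Topology

variable {n : ℕ}

theorem isSpectrahedron_setOf_forall_dual_nonneg {V W : Type*} [AddCommGroup V] [Module ℝ V]
    [Module.Finite ℝ V] [AddCommGroup W] [Module ℝ W] (q : QuadraticMap ℝ V W) :
    IsSpectrahedron {L : Module.Dual ℝ W | ∀ v, 0 ≤ L (q v)} := by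
  let Q : Module.Dual ℝ W →ₗ[ℝ] QuadraticForm ℝ V :=
    { toFun := fun L => L.compQuadraticMap q
      map_add' := fun _ _ => rfl
      map_smul' := fun _ _ => rfl }
  exact .of_affineMap Q.toAffineMap

theorem isSpectrahedron_setOf_forall_nonneg_mul_sq {σ : Type*} [Finite σ] (r : MvPolynomial σ ℝ)
    (d : ℕ) : IsSpectrahedron {L : Module.Dual ℝ (MvPolynomial σ ℝ) |
      ∀ w, w.totalDegree ≤ d → 0 ≤ L (r * w ^ 2)} := by
  convert isSpectrahedron_setOf_forall_dual_nonneg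
    (((LinearMap.mulLeft ℝ r).compQuadraticMap (QuadraticMap.sq (R := ℝ))).comp
      (restrictTotalDegree σ ℝ d).subtype) using 1
  ext L
  simp [mem_restrictTotalDegree, sq]

theorem isSpectrahedron_setOf_isPseudoExpectation (x₀ : Rn n) (ε : ℝ) (d : ℕ) :
    IsSpectrahedron {L | IsPseudoExpectation x₀ ε d L} := by
  convert (((IsSpectrahedron.hyperplane
    ((Module.Dual.eval ℝ _ 1).toAffineMap - AffineMap.const ℝ _ 1)).inter
    (isSpectrahedron_setOf_forall_nonneg_mul_sq 1 d)).inter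
    (IsSpectrahedron.biInter Finset.univ fun k _ =>
      isSpectrahedron_setOf_forall_nonneg_mul_sq (C (ε ^ 2) - centered x₀ k ^ 2) d)) using 1
  ext L
  have hiff : IsPseudoExpectation x₀ ε d L ↔ (L 1 = 1 ∧
      ∀ w, w.totalDegree ≤ d → 0 ≤ L (w ^ 2)) ∧ ∀ k w, w.totalDegree ≤ d →
        0 ≤ L ((C (ε ^ 2) - centered x₀ k ^ 2) * w ^ 2) :=
    ⟨fun h => ⟨⟨h.map_one, h.sq_nonneg⟩, h.box_nonneg⟩, fun h => ⟨h.1.1, h.1.2, h.2⟩⟩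
  simp [hiff, sub_eq_zero]

theorem isPseudoExpectation_aeval {x₀ x : Rn n} {ε : ℝ} (hx : ∀ k, |x k - x₀ k| ≤ ε) (d : ℕ) :
    IsPseudoExpectation x₀ ε d (aeval x.ofLp : MvPolynomial (Fin n) ℝ →ₐ[ℝ] ℝ).toLinearMap where
  map_one := map_one (aeval x.ofLp)
  sq_nonneg w _ := by simpa using sq_nonneg _
  box_nonneg k w _ := by
    have := pow_le_pow_left₀ (abs_nonneg _) (hx k) 2
    rw [sq_abs] at this
    simpa [centered] using mul_nonneg (sub_nonneg.2 this) (sq_nonneg _)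

/-- By Jensen's inequality, the mean of a pseudo-expectation `L` with `0 ≤ L p` satisfies
`0 ≤ p`; conversely every point is the mean of the evaluation at that point. -/
theorem eventually_isSpectrahedralShadow_box_inter {x₀ : Rn n} {p : MvPolynomial (Fin n) ℝ}
    (hp : (-phess p x₀).PosDef) :
    ∀ᶠ ε in 𝓝[>] 0, IsSpectrahedralShadow {x : Rn n | (∀ k, |x k - x₀ k| ≤ ε) ∧ 0 ≤ peval p x} := by
  filter_upwards [(eventually_localization_iff.1 (eventually_map_le_peval_mean hp)).curry,
    self_mem_nhdsWithin] with ε hjensen (hε : 0 < ε)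
  obtain ⟨d, hjensen, hd⟩ := (hjensen.and (eventually_ge_atTop 1)).exists
  convert ((isSpectrahedron_setOf_isPseudoExpectation x₀ ε d).inter
    (.halfspace (Module.Dual.eval ℝ _ p).toAffineMap)).isSpectrahedralShadow_image mean using 1
  ext x
  constructor
  · rintro ⟨hx, hpx⟩
    refine ⟨_, ⟨isPseudoExpectation_aeval hx d, ?_⟩, ?_⟩
    · simpa [peval, aeval_eq_eval] using hpx
    · ext k
      simp
  · rintro ⟨L, ⟨hL, hpL⟩, rfl⟩
    exact ⟨hL.abs_mean_sub_le hε.le hd, le_trans hpL (hjensen L hL)⟩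

end LocalShadow

/-! ### Convex geometry -/

section ConvexGeometry

variable {E : Type*} [NormedAddCommGroup E] [NormedSpace ℝ E]

/-- By Carathéodory's theorem, convex combinations of `finrank ℝ E + 1` points suffice. -/
theorem isCompact_convexHull [FiniteDimensional ℝ E] {T : Set E} (hT : IsCompact T) :
    IsCompact (convexHull ℝ T) := by
  let combinations (k : ℕ) : Set E := (fun q : (Fin k → ℝ) × (Fin k → E) => ∑ i, q.1 i • q.2 i) ''
    (stdSimplex ℝ (Fin k) ×ˢ Set.pi Set.univ fun _ => T)
  have hhull : convexHull ℝ T = ⋃ k ∈ Finset.range (Module.finrank ℝ E + 2), combinations k := by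
    refine subset_antisymm (fun x hx => ?_) (iUnion₂_subset fun k _ => ?_)
    · obtain ⟨ι, _, z, w, hz, hind, hw, hw1, rfl⟩ := eq_pos_convex_span_of_mem_convexHull hx
      have hcard : Fintype.card ι ≤ Module.finrank ℝ E + 1 :=
        hind.card_le_finrank_succ.trans (by gcongr; exact Submodule.finrank_le _)
      let e := Fintype.equivFin ι
      refine mem_iUnion₂.2 ⟨Fintype.card ι, Finset.mem_range.2 (by omega),
        (w ∘ e.symm, z ∘ e.symm), ⟨⟨fun i => (hw _).le, ?_⟩, fun i _ => hz ⟨_, rfl⟩⟩, ?_⟩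
      · exact (Equiv.sum_comp e.symm w).trans hw1
      · exact Equiv.sum_comp e.symm fun i => w i • z i
    · rintro _ ⟨⟨w, z⟩, ⟨⟨hw, hw1⟩, hz⟩, rfl⟩
      exact (convex_convexHull ℝ T).sum_mem (fun i _ => hw i) hw1
        fun i _ => subset_convexHull ℝ T (hz i trivial)
  rw [hhull]
  refine Finset.isCompact_biUnion _ fun k _ => ?_
  exact ((isCompact_stdSimplex ℝ (Fin k)).prod (isCompact_univ_pi fun _ => hT)).image (by fun_prop)

theorem exists_dual_ne_zero_forall_le_of_notMem_interior [FiniteDimensional ℝ E] {C : Set E}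
    (hC : Convex ℝ C) {v : E} (hv : v ∈ C) (hvi : v ∉ interior C) :
    ∃ f : StrongDual ℝ E, f ≠ 0 ∧ ∀ x ∈ C, f v ≤ f x := by
  by_cases hint : (interior C).Nonempty
  · obtain ⟨f, hf, hmax⟩ := geometric_hahn_banach_of_nonempty_interior_point hC hvi hint
    exact ⟨-f, neg_ne_zero.2 hf, fun x hx => neg_le_neg (hmax x hx)⟩
  · rw [hC.interior_nonempty_iff_affineSpan_eq_top,
      AffineSubspace.affineSpan_eq_top_iff_vectorSpan_eq_top_of_nonempty ℝ E E ⟨v, hv⟩] at hint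
    obtain ⟨f, hf, hspan⟩ :=
      Submodule.exists_dual_map_eq_bot_of_lt_top (lt_top_iff_ne_top.2 hint) inferInstance
    refine ⟨f.toContinuousLinearMap, by simpa using hf, fun x hx => le_of_eq ?_⟩
    have hker : f (v - x) = 0 :=
      (Submodule.eq_bot_iff _).1 hspan _ (Submodule.mem_map_of_mem (vsub_mem_vectorSpan ℝ hv hx))
    rwa [map_sub, sub_eq_zero] at hker

theorem strictConvex_of_unique_minimizers [FiniteDimensional ℝ E] {C : Set E} (hC : Convex ℝ C)
    (h : ∀ f : StrongDual ℝ E, f ≠ 0 → {v ∈ C | IsMinOn f C v}.Subsingleton) :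
    StrictConvex ℝ C := by
  intro x hx y hy hxy a b ha hb hab
  have hz := hC hx hy ha.le hb.le hab
  by_contra hzi
  obtain ⟨f, hf, hmin⟩ := exists_dual_ne_zero_forall_le_of_notMem_interior hC hz hzi
  set z := a • x + b • y with hz_def
  have hsum : a * (f x - f z) + b * (f y - f z) = 0 := by
    have hfz : f z = a * f x + b * f y := by simp [hz_def]
    linear_combination -hfz - f z * hab
  have hx_nonneg := sub_nonneg.2 (hmin x hx)
  have hy_nonneg := sub_nonneg.2 (hmin y hy)
  have hfx : f x ≤ f z := by nlinarith
  have hfy : f y ≤ f z := by nlinarith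
  exact hxy (h f hf ⟨hx, fun w hw => hfx.trans (hmin w hw)⟩
    ⟨hy, fun w hw => hfy.trans (hmin w hw)⟩)

theorem exists_mem_openSegment_mem_frontier {C : Set E} (hC : IsClosed C) {c x : E}
    (hc : c ∈ interior C) (hx : x ∉ C) : ∃ v ∈ openSegment ℝ c x, v ∈ frontier C := by
  obtain ⟨v, hv, hvC⟩ : (segment ℝ c x ∩ frontier C).Nonempty := by
    by_contra hempty
    obtain ⟨y, -, hyi, hyC⟩ := (convex_segment c x).isPreconnected (interior C) Cᶜ
      isOpen_interior hC.isOpen_compl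
      (fun y hy => or_iff_not_imp_right.2 fun hyC => by_contra fun hyi =>
        hempty ⟨y, hy, subset_closure (not_not.1 hyC), hyi⟩)
      ⟨c, left_mem_segment ℝ c x, hc⟩ ⟨x, right_mem_segment ℝ c x, hx⟩
    exact hyC (interior_subset hyi)
  rw [← insert_endpoints_openSegment] at hv
  rcases hv with rfl | rfl | hv
  · exact absurd hc hvC.2
  · exact absurd (hC.frontier_subset hvC) hx
  · exact ⟨v, hv, hvC⟩

theorem eq_setOf_forall_nonneg_of_strictConcaveOn {B C : Set E} (hC : IsClosed C)
    (hint : (interior C).Nonempty) (hCB : C ⊆ B) {P : Set (E → ℝ)}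
    (hP : ∀ p ∈ P, StrictConcaveOn ℝ B p) (hnonneg : ∀ p ∈ P, ∀ x ∈ C, 0 ≤ p x)
    (hzero : ∀ v ∈ frontier C, ∃ p ∈ P, p v = 0) : C = {x ∈ B | ∀ p ∈ P, 0 ≤ p x} := by
  refine subset_antisymm (fun x hx => ⟨hCB hx, fun p hp => hnonneg p hp x hx⟩) ?_
  rintro x ⟨hxB, hxP⟩
  by_contra hxC
  obtain ⟨c, hc⟩ := hint
  have hcC := interior_subset hc
  obtain ⟨v, ⟨a, b, ha, hb, hab, rfl⟩, hv⟩ := exists_mem_openSegment_mem_frontier hC hc hxC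
  obtain ⟨p, hp, hpv⟩ := hzero _ hv
  have hpos := (hP p hp).2 (hCB hcC) hxB (ne_of_mem_of_not_mem hcC hxC) ha hb hab
  have hc_nonneg := smul_nonneg ha.le (hnonneg p hp c hcC)
  have hx_nonneg := smul_nonneg hb.le (hxP p hp)
  linarith

end ConvexGeometry

/-! ### The convex boundary -/

section ConvexBoundary

variable {n : ℕ}

theorem exists_norm_eq_one_apply_eq_mul_sum {f : StrongDual ℝ (Rn n)} (hf : f ≠ 0) :
    ∃ l : Rn n, ‖l‖ = 1 ∧ ∃ c > 0, ∀ x, f x = c * ∑ i, l i * x i := by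
  let d := (InnerProductSpace.toDual ℝ (Rn n)).symm f
  have hd : 0 < ‖d‖ := by simpa [d] using hf
  refine ⟨‖d‖⁻¹ • d, norm_smul_inv_norm (norm_pos_iff.1 hd), ‖d‖, hd, fun x => ?_⟩
  have hfx : f x = ∑ i, d i * x i := by
    rw [← InnerProductSpace.toDual_symm_apply, PiLp.inner_apply]
    exact Finset.sum_congr rfl fun i _ => mul_comm _ _
  simp only [hfx, PiLp.smul_apply, smul_eq_mul, mul_assoc, ← Finset.mul_sum]
  rw [mul_inv_cancel_left₀ hd.ne']

theorem mem_convexBoundary_of_isMinOn {T : Set (Rn n)} {f : StrongDual ℝ (Rn n)} (hf : f ≠ 0)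
    {v : Rn n} (hv : v ∈ T) (hmin : IsMinOn f T v) : v ∈ convexBoundary T := by
  obtain ⟨l, hl, c, hc, hfl⟩ := exists_norm_eq_one_apply_eq_mul_sum hf
  refine ⟨hv, l, hl, fun x hx => ?_⟩
  have hle := isMinOn_iff.1 hmin x hx
  rwa [hfl, hfl, mul_le_mul_iff_right₀ hc] at hle

theorem isCompact_convexBoundary {T : Set (Rn n)} (hT : IsCompact T) :
    IsCompact (convexBoundary T) := by
  have hpairs : IsCompact ((T ×ˢ sphere (0 : Rn n) 1) ∩
      ⋂ x ∈ T, {q : Rn n × Rn n | ∑ i, q.2 i * q.1 i ≤ ∑ i, q.2 i * x i}) := by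
    refine (hT.prod (isCompact_sphere 0 1)).inter_right (isClosed_biInter fun x _ => ?_)
    exact isClosed_le (by fun_prop) (by fun_prop)
  convert hpairs.image continuous_fst using 1
  ext u
  simp [convexBoundary, and_assoc]

theorem subset_convexHull_convexBoundary [Nontrivial (Rn n)] {T : Set (Rn n)} (hT : IsCompact T) :
    T ⊆ convexHull ℝ (convexBoundary T) := by
  intro x hx
  have hmin {f : StrongDual ℝ (Rn n)} (hf : f ≠ 0) : ∃ w ∈ convexBoundary T, f w ≤ f x := by
    obtain ⟨w, hw, hmin⟩ := hT.exists_isMinOn ⟨x, hx⟩ f.continuous.continuousOn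
    exact ⟨w, mem_convexBoundary_of_isMinOn hf hw hmin, hmin hx⟩
  by_contra hxK
  obtain ⟨f, r, hfx, hfK⟩ := geometric_hahn_banach_point_closed (convex_convexHull ℝ _)
    (isCompact_convexHull (isCompact_convexBoundary hT)).isClosed hxK
  have hf : f ≠ 0 := by
    rintro rfl
    obtain ⟨g, hg⟩ := exists_ne (0 : StrongDual ℝ (Rn n))
    obtain ⟨w, hw, -⟩ := hmin hg
    exact (hfx.trans (hfK w (subset_convexHull ℝ _ hw))).false
  obtain ⟨w, hw, hwx⟩ := hmin hf
  exact (hwx.trans_lt (hfx.trans (hfK w (subset_convexHull ℝ _ hw)))).false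

theorem mem_convexBoundary_of_mem_convexHull_sdiff_interior {T : Set (Rn n)}
    (hT : StrictConvex ℝ (convexHull ℝ T)) {v : Rn n}
    (hv : v ∈ convexHull ℝ T \ interior (convexHull ℝ T)) : v ∈ convexBoundary T := by
  have hvT : v ∈ T := extremePoints_convexHull_subset (hT.sdiff_interior_subset_extremePoints hv)
  obtain ⟨f, hf, hmin⟩ := exists_dual_ne_zero_forall_le_of_notMem_interior hT.convex hv.1 hv.2
  exact mem_convexBoundary_of_isMinOn hf hvT fun x hx => hmin x (subset_convexHull ℝ T hx)

end ConvexBoundary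

/-! ### Concave cuts -/

section ConcaveCut

variable {n : ℕ} {B T : Set (Rn n)} {p : MvPolynomial (Fin n) ℝ}

/-- A valid polynomial inequality `0 ≤ p` for `T` whose left-hand side has a negative definite
Hessian on `B`. -/
structure IsConcaveCut (B T : Set (Rn n)) (p : MvPolynomial (Fin n) ℝ) : Prop where
  nonneg : ∀ x ∈ T, 0 ≤ peval p x
  posDef : ∀ x ∈ B, (-phess p x).PosDef

theorem IsConcaveCut.nonneg_of_mem_convexHull (hp : IsConcaveCut B T p) (hB : Convex ℝ B)
    (hTB : T ⊆ B) {x : Rn n} (hx : x ∈ convexHull ℝ T) : 0 ≤ peval p x := by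
  have hsub : T ⊆ {y ∈ B | 0 ≤ peval p y} := fun y hy => ⟨hTB hy, hp.nonneg y hy⟩
  exact (convexHull_min hsub ((strictConcaveOn_peval hB hp.posDef).concaveOn.convex_ge 0) hx).2

theorem isConcaveCut_ballPoly {u : Rn n} {δ : ℝ} (hδ : 0 ≤ δ) (hT : T ⊆ closedBall u δ) :
    IsConcaveCut B T (ballPoly u δ) where
  nonneg _ hx := (peval_ballPoly_nonneg_iff hδ).2 (hT hx)
  posDef x _ := by
    rw [neg_phess_ballPoly]
    exact Matrix.PosDef.one.smul two_pos

theorem strictConvex_convexHull_of_isConcaveCut (hB : Convex ℝ B) (hT : IsCompact T)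
    (hTB : T ⊆ B)
    (h : ∀ l : Rn n, ‖l‖ = 1 → ∀ v ∈ T, (∀ x ∈ T, ∑ i, l i * v i ≤ ∑ i, l i * x i) →
      ∃ p, IsConcaveCut B T p ∧ peval p v = 0 ∧ pgrad p v = l.ofLp) :
    StrictConvex ℝ (convexHull ℝ T) := by
  refine strictConvex_of_unique_minimizers (convex_convexHull ℝ T) fun f hf => ?_
  rcases T.eq_empty_or_nonempty with rfl | hne
  · simp
  obtain ⟨w, hw, hmin⟩ := hT.exists_isMinOn hne f.continuous.continuousOn
  obtain ⟨l, hl, c, hc, hfl⟩ := exists_norm_eq_one_apply_eq_mul_sum hf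
  obtain ⟨p, hp, hpw, hgrad⟩ := h l hl w hw fun x hx => by
    have hle := isMinOn_iff.1 hmin x hx
    rwa [hfl, hfl, mul_le_mul_iff_right₀ hc] at hle
  suffices huniq : ∀ x ∈ {v ∈ convexHull ℝ T | IsMinOn f (convexHull ℝ T) v}, x = w from
    fun x hx y hy => (huniq x hx).trans (huniq y hy).symm
  rintro x ⟨hx, hxmin⟩
  by_contra hxw
  have hlt := peval_lt_of_forall_posDef_neg_phess hB hp.posDef (hTB hw)
    (convexHull_min hTB hB hx) (Ne.symm hxw)
  have hnonneg := hp.nonneg_of_mem_convexHull hB hTB hx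
  have hle : f x ≤ f w := hxmin (subset_convexHull ℝ T hw)
  rw [hfl, hfl, mul_le_mul_iff_right₀ hc] at hle
  rw [hpw, hgrad, WithLp.ofLp_sub, dotProduct_sub] at hlt
  simp only [dotProduct] at hlt
  linarith

theorem convexHull_eq_setOf_forall_nonneg (hB : Convex ℝ B) (hT : IsCompact T) (hTB : T ⊆ B)
    (hnt : T.Nontrivial) (hstrict : StrictConvex ℝ (convexHull ℝ T))
    {P : Set (MvPolynomial (Fin n) ℝ)} (hP : ∀ p ∈ P, IsConcaveCut B T p)
    (hzero : ∀ v ∈ convexBoundary T, ∃ p ∈ P, peval p v = 0) :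
    convexHull ℝ T = {x ∈ B | ∀ p ∈ P, 0 ≤ peval p x} := by
  have hclosed := (isCompact_convexHull hT).isClosed
  obtain ⟨x, hx, y, hy, hxy⟩ := hnt
  have hint : (interior (convexHull ℝ T)).Nonempty :=
    ⟨_, hstrict (subset_convexHull ℝ T hx) (subset_convexHull ℝ T hy) hxy one_half_pos one_half_pos
      (add_halves 1)⟩
  rw [eq_setOf_forall_nonneg_of_strictConcaveOn hclosed hint (convexHull_min hTB hB)
    (P := peval '' P)]
  · simp only [forall_mem_image]
  · exact forall_mem_image.2 fun p hp => strictConcaveOn_peval hB (hP p hp).posDef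
  · exact forall_mem_image.2 fun p hp x hx => (hP p hp).nonneg_of_mem_convexHull hB hTB hx
  · intro v hv
    rw [exists_mem_image]
    exact hzero v (mem_convexBoundary_of_mem_convexHull_sdiff_interior hstrict
      ⟨hclosed.frontier_subset hv, hv.2⟩)

theorem isSpectrahedralShadow_setOf_forall_nonneg {P : Finset (MvPolynomial (Fin n) ℝ)}
    (hcpt : IsCompact {x : Rn n | ∀ p ∈ P, 0 ≤ peval p x})
    (hconv : Convex ℝ {x : Rn n | ∀ p ∈ P, 0 ≤ peval p x})
    (hP : ∀ x : Rn n, (∀ p ∈ P, 0 ≤ peval p x) → ∀ p ∈ P, (-phess p x).PosDef) :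
    IsSpectrahedralShadow {x : Rn n | ∀ p ∈ P, 0 ≤ peval p x} := by
  rcases P.eq_empty_or_nonempty with rfl | ⟨q, hq⟩
  · simpa using IsSpectrahedron.univ.isSpectrahedralShadow
  rw [← hconv.convexHull_eq]
  refine .convexHull_of_locally hcpt Subset.rfl (subset_convexHull ℝ _) fun x hx => ?_
  have hlocal := (Filter.eventually_all_finset P).2 fun p hp =>
    eventually_isSpectrahedralShadow_box_inter (hP x hx p hp)
  obtain ⟨ε, hε, hε0⟩ := (hlocal.and self_mem_nhdsWithin).exists
  refine ⟨{y | ∀ k, |y k - x k| ≤ ε}, ?_, ?_⟩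
  · filter_upwards [ball_mem_nhds x hε0] with y hy k
    exact (PiLp.norm_apply_le (y - x) k).trans (mem_ball_iff_norm.1 hy).le
  · have hinter : {x : Rn n | ∀ p ∈ P, 0 ≤ peval p x} ∩ {y | ∀ k, |y k - x k| ≤ ε} =
        ⋂ p ∈ P, {y | (∀ k, |y k - x k| ≤ ε) ∧ 0 ≤ peval p y} := by
      ext y
      simp only [mem_inter_iff, mem_ofPred_eq, mem_iInter]
      exact ⟨fun hy p hp => ⟨hy.2, hy.1 p hp⟩, fun hy => ⟨fun p hp => (hy p hp).2, (hy q hq).1⟩⟩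
    have hshadow := IsSpectrahedralShadow.biInter P hε
    rwa [hinter, hshadow.convex.convexHull_eq]

theorem isSpectrahedralShadow_convexHull_of_isConcaveCut (hB : Convex ℝ B) (hT : IsCompact T)
    (hTB : T ⊆ B) (hnt : T.Nontrivial) (hstrict : StrictConvex ℝ (convexHull ℝ T))
    {P : Finset (MvPolynomial (Fin n) ℝ)} (hP : ∀ p ∈ P, IsConcaveCut B T p)
    (hzero : ∀ v ∈ convexBoundary T, ∃ p ∈ P, peval p v = 0)
    (hPB : ∀ x, (∀ p ∈ P, 0 ≤ peval p x) → x ∈ B) : IsSpectrahedralShadow (convexHull ℝ T) := by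
  have hhull : convexHull ℝ T = {x | ∀ p ∈ P, 0 ≤ peval p x} := by
    refine (convexHull_eq_setOf_forall_nonneg hB hT hTB hnt hstrict (P := P) hP hzero).trans ?_
    exact subset_antisymm (fun x hx => hx.2) fun x hx => ⟨hPB x hx, hx⟩
  rw [hhull]
  refine isSpectrahedralShadow_setOf_forall_nonneg ?_ ?_ fun x hx p hp =>
    (hP p hp).posDef x (hPB x hx)
  · exact hhull ▸ isCompact_convexHull hT
  · exact hhull ▸ convex_convexHull ℝ T

end ConcaveCut

/-! ### The Lagrange Hessian condition -/

section PDLH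

variable {n m1 m2 : ℕ} {f : Fin m1 → MvPolynomial (Fin n) ℝ} {h : Fin m2 → MvPolynomial (Fin n) ℝ}

/-- The combination `∑ λₖ fₖ + ∑ μⱼ gⱼ` of the constraint polynomials, which differs from the
Lagrangian of a linear objective by sign and by an affine function. -/
def lagrangeCombination (f : Fin m1 → MvPolynomial (Fin n) ℝ)
    (g : Fin m2 → MvPolynomial (Fin n) ℝ) (lam : Fin m1 → ℝ) (mu : Fin m2 → ℝ) :
    MvPolynomial (Fin n) ℝ :=
  ∑ k, lam k • f k + ∑ j, mu j • g j

theorem peval_lagrangeCombination (f : Fin m1 → MvPolynomial (Fin n) ℝ)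
    (g : Fin m2 → MvPolynomial (Fin n) ℝ) (lam : Fin m1 → ℝ) (mu : Fin m2 → ℝ) (x : Rn n) :
    peval (lagrangeCombination f g lam mu) x =
      ∑ k, lam k * peval (f k) x + ∑ j, mu j * peval (g j) x := by
  simp [peval, lagrangeCombination, smul_eval]

theorem pgrad_lagrangeCombination (f : Fin m1 → MvPolynomial (Fin n) ℝ)
    (g : Fin m2 → MvPolynomial (Fin n) ℝ) (lam : Fin m1 → ℝ) (mu : Fin m2 → ℝ) (x : Rn n)
    (i : Fin n) :
    pgrad (lagrangeCombination f g lam mu) x i =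
      ∑ k, lam k * pgrad (f k) x i + ∑ j, mu j * pgrad (g j) x i := by
  simp [pgrad, lagrangeCombination, smul_eval]

theorem phess_lagrangeCombination (f : Fin m1 → MvPolynomial (Fin n) ℝ)
    (g : Fin m2 → MvPolynomial (Fin n) ℝ) (lam : Fin m1 → ℝ) (mu : Fin m2 → ℝ) (x : Rn n)
    (i j : Fin n) :
    phess (lagrangeCombination f g lam mu) x i j =
      ∑ k, lam k * phess (f k) x i j + ∑ k, mu k * phess (g k) x i j := by
  simp [phess, lagrangeCombination, smul_eval]

theorem peval_extFamily_nonneg {u : Rn n} {δ : ℝ} {x : Rn n} (hx : ∀ j, 0 ≤ peval (h j) x)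
    (hxu : x ∈ closedBall u δ) (j : Fin (m2 + 1)) : 0 ≤ peval (extFamily h u δ j) x := by
  have hδ : 0 ≤ δ := dist_nonneg.trans hxu
  refine Fin.lastCases ?_ (fun j => ?_) j
  · simpa only [extFamily, Fin.snoc_last] using (peval_ballPoly_nonneg_iff hδ).2 hxu
  · simpa only [extFamily, Fin.snoc_castSucc] using hx j

/-- The indices of the inequality constraints that hold with equality at `x`. -/
def activeSet {m : ℕ} (g : Fin m → MvPolynomial (Fin n) ℝ) (x : Rn n) : Set (Fin m) :=
  {j | peval (g j) x = 0}

variable {T : Set (Rn n)} {u : Rn n} {δ : ℝ}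

theorem PDLHAt.exists_isConcaveCut (hP : PDLHAt f h T u δ) (hδ : 0 < δ)
    (hf : ∀ x ∈ T, ∀ i, peval (f i) x = 0) (hh : ∀ x ∈ T, ∀ j, 0 ≤ peval (h j) x)
    {l : Rn n} (hl : ‖l‖ = 1) {v : Rn n} (hv : v ∈ T ∩ closedBall u δ)
    (hmin : ∀ x ∈ T ∩ closedBall u δ, ∑ i, l i * v i ≤ ∑ i, l i * x i) :
    ∃ p, IsConcaveCut (closedBall u δ) (T ∩ closedBall u δ) p ∧ pgrad p v = l.ofLp ∧
      ∀ x ∈ T, activeSet (extFamily h u δ) v ⊆ activeSet (extFamily h u δ) x → peval p x = 0 := by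
  obtain ⟨lam, mu, hmu, hcompl, hgrad, hhess⟩ := hP l hl δ hδ le_rfl v hv hmin
  have hpeval (x : Rn n) (hx : x ∈ T) : peval (lagrangeCombination f (extFamily h u δ) lam mu) x =
      ∑ j, mu j * peval (extFamily h u δ j) x := by
    simp [peval_lagrangeCombination, hf x hx]
  refine ⟨lagrangeCombination f (extFamily h u δ) lam mu, ⟨fun x hx => ?_, fun x hx => ?_⟩,
    ?_, fun x hx hactive => ?_⟩
  · rw [hpeval x hx.1]
    exact Finset.sum_nonneg fun j _ =>
      mul_nonneg (hmu j) (peval_extFamily_nonneg (hh x hx.1) hx.2 j)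
  · convert hhess x hx using 1
    ext i j
    rw [Matrix.neg_apply, phess_lagrangeCombination, Matrix.of_apply]
    ring
  · ext i
    rw [pgrad_lagrangeCombination, hgrad i]
  · rw [hpeval x hx]
    exact Finset.sum_eq_zero fun j _ =>
      mul_eq_zero.2 ((mul_eq_zero.1 (hcompl j)).imp_right fun hj => hactive hj)

/-- The cut at `v` also vanishes wherever the same constraints are active, so one cut per active
set is enough. -/
theorem PDLHAt.exists_finite_isConcaveCut (hP : PDLHAt f h T u δ) (hδ : 0 < δ)
    (hf : ∀ x ∈ T, ∀ i, peval (f i) x = 0) (hh : ∀ x ∈ T, ∀ j, 0 ≤ peval (h j) x) :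
    ∃ P : Set (MvPolynomial (Fin n) ℝ), P.Finite ∧
      (∀ p ∈ P, IsConcaveCut (closedBall u δ) (T ∩ closedBall u δ) p) ∧
      ∀ v ∈ convexBoundary (T ∩ closedBall u δ), ∃ p ∈ P, peval p v = 0 := by
  have hcut : ∀ v ∈ convexBoundary (T ∩ closedBall u δ),
      ∃ p, IsConcaveCut (closedBall u δ) (T ∩ closedBall u δ) p ∧
        ∀ x ∈ T, activeSet (extFamily h u δ) v ⊆ activeSet (extFamily h u δ) x →
          peval p x = 0 := by
    rintro v ⟨hv, l, hl, hmin⟩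
    obtain ⟨p, hp, -, hzero⟩ := hP.exists_isConcaveCut hδ hf hh hl hv hmin
    exact ⟨p, hp, hzero⟩
  choose! cut hcut hzero using hcut
  obtain ⟨s, hs, hbij⟩ := exists_subset_bijOn (convexBoundary (T ∩ closedBall u δ))
    (activeSet (extFamily h u δ))
  refine ⟨cut '' s, (hbij.finite_iff_finite.2 (toFinite _)).image cut,
    forall_mem_image.2 fun w hw => hcut w (hs hw), fun v hv => ?_⟩
  obtain ⟨w, hw, hwv⟩ := hbij.surjOn (mem_image_of_mem _ hv)
  exact ⟨cut w, mem_image_of_mem cut hw, hzero w (hs hw) v hv.1.1 hwv.subset⟩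

theorem PDLHAt.strictConvex_convexHull_inter_closedBall (hP : PDLHAt f h T u δ) (hδ : 0 < δ)
    (hT : IsCompact T) (hf : ∀ x ∈ T, ∀ i, peval (f i) x = 0)
    (hh : ∀ x ∈ T, ∀ j, 0 ≤ peval (h j) x) :
    StrictConvex ℝ (convexHull ℝ (T ∩ closedBall u δ)) := by
  refine strictConvex_convexHull_of_isConcaveCut (convex_closedBall u δ)
    (hT.inter_right isClosed_closedBall) inter_subset_right fun l hl v hv hmin => ?_
  obtain ⟨p, hp, hgrad, hzero⟩ := hP.exists_isConcaveCut hδ hf hh hl hv hmin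
  exact ⟨p, hp, hzero v hv.1 Subset.rfl, hgrad⟩

theorem PDLHAt.isSpectrahedralShadow_convexHull_inter_closedBall (hP : PDLHAt f h T u δ)
    (hδ : 0 < δ) (hT : IsCompact T) (hf : ∀ x ∈ T, ∀ i, peval (f i) x = 0)
    (hh : ∀ x ∈ T, ∀ j, 0 ≤ peval (h j) x) :
    IsSpectrahedralShadow (convexHull ℝ (T ∩ closedBall u δ)) := by
  classical
  rcases (T ∩ closedBall u δ).subsingleton_or_nontrivial with hss | hnt
  · rw [hss.convex.convexHull_eq]
    exact .of_subsingleton hss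
  obtain ⟨P, hfin, hcut, hzero⟩ := hP.exists_finite_isConcaveCut hδ hf hh
  lift P to Finset (MvPolynomial (Fin n) ℝ) using hfin
  refine isSpectrahedralShadow_convexHull_of_isConcaveCut (convex_closedBall u δ)
    (hT.inter_right isClosed_closedBall) inter_subset_right hnt
    (hP.strictConvex_convexHull_inter_closedBall hδ hT hf hh) (P := insert (ballPoly u δ) P)
    (Finset.forall_mem_insert _ _ _ |>.2 ⟨isConcaveCut_ballPoly hδ.le inter_subset_right, hcut⟩)
    (fun v hv => ?_) fun x hx => ?_
  · obtain ⟨p, hp, hpv⟩ := hzero v hv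
    exact ⟨p, Finset.mem_insert_of_mem hp, hpv⟩
  · exact (peval_ballPoly_nonneg_iff hδ.le).1 (hx _ (Finset.mem_insert_self _ _))

end PDLH

/-- if the PDLH condition holds at every point of the convex boundary
of the compact set `T = {x | f(x) = 0, h(x) ≥ 0}`, then `conv(T)` is SDP representable. -/
theorem isSDPRepresentable_convexHull_of_PDLH {n m1 m2 : ℕ}
    (f : Fin m1 → MvPolynomial (Fin n) ℝ) (h : Fin m2 → MvPolynomial (Fin n) ℝ)
    (T : Set (Rn n))
    (hT : T = {x : Rn n | (∀ i, peval (f i) x = 0) ∧ ∀ j, 0 ≤ peval (h j) x})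
    (hcpt : IsCompact T)
    (hpdlh : ∀ u ∈ convexBoundary T, ∃ δu > 0, PDLHAt f h T u δu) :
    IsSDPRepresentable (convexHull ℝ T) := by
  have hf : ∀ x ∈ T, ∀ i, peval (f i) x = 0 := fun x hx => (hT.subset hx).1
  have hh : ∀ x ∈ T, ∀ j, 0 ≤ peval (h j) x := fun x hx => (hT.subset hx).2
  apply IsSpectrahedralShadow.isSDPRepresentable
  rcases T.subsingleton_or_nontrivial with hss | ⟨x, -, y, -, hxy⟩
  · rw [hss.convex.convexHull_eq]
    exact .of_subsingleton hss
  have : Nontrivial (Rn n) := ⟨x, y, hxy⟩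
  refine .convexHull_of_locally (isCompact_convexBoundary hcpt) (fun u hu => hu.1)
    (subset_convexHull_convexBoundary hcpt) fun u hu => ?_
  obtain ⟨δ, hδ, hP⟩ := hpdlh u hu
  exact ⟨closedBall u δ, closedBall_mem_nhds u hδ,
    hP.isSpectrahedralShadow_convexHull_inter_closedBall hδ hcpt hf hh⟩
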